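/- Let 𝒴 be a Polish space, 𝒳 a Polish space, r ∈ [1,∞), and let C : 𝒳 × 𝒫_r(𝒴) → ℝ ∪ {+∞} be measurable with C(x,p) ≥ −K(1 + d_𝒳(x,x₀)^r + 𝒲_r(p,δ_{y₀})^r) for some constant K and (x₀,y₀). Define C̃(x,p) := inf{ ∫ C(x,q) Q(dq) : Q ∈ 𝒫_r(𝒫_r(𝒴)), I(Q) = p }, and let C**_x denote the lower semicontinuous convex envelope of p ↦ C(x,p). Then for all (x,p) ∈ 𝒳 × 𝒫_r(𝒴) and all Q ∈ 𝒫_r(𝒫_r(𝒴)) with I(Q) = p: C**_x(p) ≤ C̃(x,p) ≤ ∫ C̃(x,q) Q(dq). Moreover, if C(x,·) is lower semicontinuous then C**_x(p) = C̃(x,p) for all p ∈ 𝒫_r(𝒴). -/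

import Mathlib

open MeasureTheory Set Filter
open scoped ENNReal NNReal Topology RealInnerProductSpace

noncomputable section

namespace WOT

/-- The set of couplings of `μ` and `ν`. -/
def Couplings {X Y : Type*} [MeasurableSpace X] [MeasurableSpace Y]
    (μ : Measure X) (ν : Measure Y) : Set (Measure (X × Y)) :=
  {π | π.map Prod.fst = μ ∧ π.map Prod.snd = ν}

/-- `K` is a disintegration of `π` with respect to its first marginal `μ`. -/
def IsDisint {X Y : Type*} [MeasurableSpace X] [MeasurableSpace Y]
    (π : Measure (X × Y)) (μ : Measure X) (K : X → Measure Y) : Prop :=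
  Measurable K ∧ (∀ x, IsProbabilityMeasure (K x)) ∧
    ∀ s : Set (X × Y), MeasurableSet s → π s = ∫⁻ x, K x (Prod.mk x ⁻¹' s) ∂μ

/-- The intensity `I(Q)` of a measure on measures. -/
def intensity {Y : Type*} [MeasurableSpace Y] (Q : Measure (Measure Y)) : Measure Y :=
  Q.join

/-- The intensity map `Î`. -/
def intensityHat {X Y : Type*} [MeasurableSpace X] [MeasurableSpace Y]
    (P : Measure (X × Measure Y)) : Measure (X × Y) :=
  P.bind fun xp => (Measure.dirac xp.1).prod xp.2

/-- `Λ(μ,ν)`, the set of probability measures on `X × 𝒫(Y)` whose intensity is a coupling. -/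
def Lambda {X Y : Type*} [MeasurableSpace X] [MeasurableSpace Y]
    (μ : Measure X) (ν : Measure Y) : Set (Measure (X × Measure Y)) :=
  {P | IsProbabilityMeasure P ∧ (∀ᵐ xp ∂P, IsProbabilityMeasure xp.2) ∧
    intensityHat P ∈ Couplings μ ν}

/-- Finite `r`-th moment. -/
def FinMom {X : Type*} [MeasurableSpace X] [PseudoMetricSpace X]
    (r : ℝ) (x₀ : X) (μ : Measure X) : Prop :=
  ∫⁻ x, ENNReal.ofReal (dist x x₀ ^ r) ∂μ < ⊤

/-- The growth class `Φ_r`. -/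
def PhiR {X : Type*} [PseudoMetricSpace X] (r : ℝ) (x₀ : X) : Set (X → ℝ) :=
  {φ | Continuous φ ∧ ∃ K : ℝ, ∀ x, |φ x| ≤ K * (1 + dist x x₀ ^ r)}

/-- The `r`-Wasserstein distance (valued in `ℝ≥0∞`). -/
def Wr {Y : Type*} [MeasurableSpace Y] [PseudoMetricSpace Y]
    (r : ℝ) (p q : Measure Y) : ℝ≥0∞ :=
  ⨅ π ∈ Couplings p q, (∫⁻ z : Y × Y, ENNReal.ofReal (dist z.1 z.2 ^ r) ∂π) ^ (1 / r)

/-- `𝒫_r(Y)`: probability measures with finite `r`-th moment. -/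
def Pr {Y : Type*} [MeasurableSpace Y] [PseudoMetricSpace Y] (r : ℝ) (y₀ : Y) :
    Set (Measure Y) :=
  {p | IsProbabilityMeasure p ∧ FinMom r y₀ p}

/-- `𝒫_r(𝒫_r(Y))`: probability measures on `𝒫_r(Y)` with finite `r`-th moment w.r.t. `𝒲_r`. -/
def PrP {Y : Type*} [MeasurableSpace Y] [PseudoMetricSpace Y] (r : ℝ) (y₀ : Y) :
    Set (Measure (Measure Y)) :=
  {Q | IsProbabilityMeasure Q ∧ (∀ᵐ p ∂Q, p ∈ Pr r y₀) ∧
    ∫⁻ p, Wr r p (Measure.dirac y₀) ^ r ∂Q < ⊤}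

/-- The positive part of an extended real, valued in `ℝ≥0∞`. -/
def epos (e : EReal) : ℝ≥0∞ := if e = ⊤ then ⊤ else ENNReal.ofReal e.toReal

/-- Extended-real integral: positive part minus negative part (with value `⊥` when
both parts are infinite, i.e. when the integral is not well-defined). -/
def eInt {X : Type*} [MeasurableSpace X] (f : X → EReal) (μ : Measure X) : EReal :=
  ((∫⁻ x, epos (f x) ∂μ : ℝ≥0∞) : EReal) - ((∫⁻ x, epos (-(f x)) ∂μ : ℝ≥0∞) : EReal)

/-- Extended-real integral with the opposite (`⊤`) convention for ill-defined integrals. -/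
def eIntU {X : Type*} [MeasurableSpace X] (f : X → EReal) (μ : Measure X) : EReal :=
  -eInt (fun x => -(f x)) μ

/-- The extended-real integral is well-defined. -/
def eIntWellDef {X : Type*} [MeasurableSpace X] (f : X → EReal) (μ : Measure X) : Prop :=
  (∫⁻ x, epos (f x) ∂μ ≠ ⊤) ∨ (∫⁻ x, epos (-(f x)) ∂μ ≠ ⊤)

/-- Convergence in the `r`-Wasserstein distance. -/
def WrTendsto {Y : Type*} [MeasurableSpace Y] [PseudoMetricSpace Y]
    (r : ℝ) (ps : ℕ → Measure Y) (p : Measure Y) : Prop :=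
  Tendsto (fun n => Wr r (ps n) p) atTop (nhds 0)

/-- (Sequential) lower semicontinuity on `𝒫_r(Y)` w.r.t. `𝒲_r`. -/
def LscWr1 {Y : Type*} [MeasurableSpace Y] [PseudoMetricSpace Y]
    (r : ℝ) (y₀ : Y) (G : Measure Y → EReal) : Prop :=
  ∀ (p : Measure Y) (ps : ℕ → Measure Y), p ∈ Pr r y₀ → (∀ n, ps n ∈ Pr r y₀) →
    WrTendsto r ps p → G p ≤ liminf (fun n => G (ps n)) atTop

/-- (Sequential) upper semicontinuity on `𝒫_r(Y)` w.r.t. `𝒲_r`. -/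
def UscWr1 {Y : Type*} [MeasurableSpace Y] [PseudoMetricSpace Y]
    (r : ℝ) (y₀ : Y) (G : Measure Y → EReal) : Prop :=
  ∀ (p : Measure Y) (ps : ℕ → Measure Y), p ∈ Pr r y₀ → (∀ n, ps n ∈ Pr r y₀) →
    WrTendsto r ps p → limsup (fun n => G (ps n)) atTop ≤ G p

/-- (Sequential) lower semicontinuity on `X × 𝒫_r(Y)` w.r.t. `d_X × 𝒲_r`. -/
def LscWr {X Y : Type*} [TopologicalSpace X] [MeasurableSpace Y] [PseudoMetricSpace Y]
    (r : ℝ) (y₀ : Y) (C : X × Measure Y → EReal) : Prop :=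
  ∀ (x : X) (xs : ℕ → X) (p : Measure Y) (ps : ℕ → Measure Y),
    p ∈ Pr r y₀ → (∀ n, ps n ∈ Pr r y₀) → Tendsto xs atTop (nhds x) → WrTendsto r ps p →
    C (x, p) ≤ liminf (fun n => C (xs n, ps n)) atTop

/-- (Sequential) continuity of a real-valued cost on `X × 𝒫_r(Y)` w.r.t. `d_X × 𝒲_r`. -/
def ContWr {X Y : Type*} [TopologicalSpace X] [MeasurableSpace Y] [PseudoMetricSpace Y]
    (r : ℝ) (y₀ : Y) (C : X × Measure Y → ℝ) : Prop :=
  ∀ (x : X) (xs : ℕ → X) (p : Measure Y) (ps : ℕ → Measure Y),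
    p ∈ Pr r y₀ → (∀ n, ps n ∈ Pr r y₀) → Tendsto xs atTop (nhds x) → WrTendsto r ps p →
    Tendsto (fun n => C (xs n, ps n)) atTop (nhds (C (x, p)))

/-- Convexity of an extended-real-valued function on a set of measures. -/
def EConvexOn {Y : Type*} [MeasurableSpace Y] (S : Set (Measure Y)) (G : Measure Y → EReal) :
    Prop :=
  ∀ p ∈ S, ∀ q ∈ S, ∀ t : ℝ≥0, t ≤ 1 →
    G ((t : ℝ≥0∞) • p + ((1 - t : ℝ≥0) : ℝ≥0∞) • q)
      ≤ ((t : ℝ) : EReal) * G p + (((1 - t : ℝ≥0) : ℝ) : EReal) * G q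

/-- The lower semicontinuous convex envelope (on `𝒫_r(Y)` w.r.t. `𝒲_r`). -/
def cvxEnvWr {Y : Type*} [MeasurableSpace Y] [PseudoMetricSpace Y]
    (r : ℝ) (y₀ : Y) (f : Measure Y → EReal) : Measure Y → EReal :=
  fun p => ⨆ G ∈ {G : Measure Y → EReal |
    LscWr1 r y₀ G ∧ EConvexOn (Pr r y₀) G ∧ ∀ q ∈ Pr r y₀, G q ≤ f q}, G p

/-- The cost `C̃(x,p) = inf {∫ C(x,q) Q(dq) : Q ∈ 𝒫_r(𝒫_r(Y)), I(Q) = p}`. -/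
def tildeC {X Y : Type*} [MeasurableSpace X] [MeasurableSpace Y] [PseudoMetricSpace Y]
    (r : ℝ) (y₀ : Y) (C : X × Measure Y → EReal) : X × Measure Y → EReal :=
  fun xp => ⨅ Q ∈ {Q | Q ∈ PrP r y₀ ∧ intensity Q = xp.2}, eInt (fun q => C (xp.1, q)) Q

/-- The barycenter of a measure on a normed space. -/
def bary {E : Type*} [NormedAddCommGroup E] [NormedSpace ℝ E] [MeasurableSpace E]
    (p : Measure E) : E :=
  ∫ y, y ∂p

/-- Convex order of measures. -/
def ConvexOrder {E : Type*} [NormedAddCommGroup E] [NormedSpace ℝ E] [MeasurableSpace E]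
    (ν' ν : Measure E) : Prop :=
  ∀ θ : E → ℝ, ConvexOn ℝ Set.univ θ →
    eInt (fun y => ((θ y : ℝ) : EReal)) ν' ≤ eInt (fun y => ((θ y : ℝ) : EReal)) ν

/-- The inf-convolution `R_C ψ`. -/
def RC {X Y : Type*} [MeasurableSpace Y] [PseudoMetricSpace Y]
    (r : ℝ) (y₀ : Y) (C : X × Measure Y → EReal) (ψ : Y → ℝ) : X → EReal :=
  fun x => ⨅ p ∈ Pr r y₀, (((-∫ y, ψ y ∂p : ℝ) : EReal) + C (x, p))

/-- `κ` is a regular conditional distribution of `Yv` given the sub-σ-algebra `m1`. -/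
def IsRCD {Ω Y : Type*} [MeasurableSpace Y] (m1 : MeasurableSpace Ω)
    (mΩ : MeasurableSpace Ω) (P : @Measure Ω mΩ) (Yv : Ω → Y) (κ : Ω → Measure Y) : Prop :=
  (∀ ω, IsProbabilityMeasure (κ ω)) ∧ Measurable[m1] κ ∧
    ∀ A : Set Y, MeasurableSet A → ∀ B : Set Ω, MeasurableSet[m1] B →
      P (B ∩ Yv ⁻¹' A) = ∫⁻ ω in B, κ ω A ∂P

end WOT

namespace WOTaux

/-- continuous injection of the Baire space into the reals -/
lemma exists_cont_inj_real : ∃ e : (ℕ → ℕ) → ℝ, Continuous e ∧ Function.Injective e := by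
  let code : (ℕ → ℕ) → (ℕ → Bool) := fun σ n =>
    decide (σ (Nat.unpair n).1 = (Nat.unpair n).2)
  have hc : Continuous code := by
    refine continuous_pi fun n => ?_
    have : Continuous (fun k : ℕ => decide (k = (Nat.unpair n).2)) := continuous_of_discreteTopology
    exact this.comp (continuous_apply _)
  have hi : Function.Injective code := by
    intro σ τ h
    funext i
    have := congrFun h (Nat.pair i (σ i))
    simp [code] at this
    exact this.symm
  refine ⟨fun σ => (cantorSetHomeomorphNatToBool.symm (code σ) : ℝ), ?_, ?_⟩
  · exact continuous_subtype_val.comp (cantorSetHomeomorphNatToBool.symm.continuous.comp hc)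
  · intro σ τ h
    exact hi (cantorSetHomeomorphNatToBool.symm.injective (Subtype.ext h))

/-- measurable section over a compact set -/
lemma exists_section_compact {S : Type*} [TopologicalSpace S] [T2Space S] [MeasurableSpace S]
    [OpensMeasurableSpace S] (f : (ℕ → ℕ) → S) (hf : Continuous f) (K : Set (ℕ → ℕ))
    (hK : IsCompact K) :
    ∃ σ : S → (ℕ → ℕ), Measurable σ ∧ ∀ s ∈ f '' K, f (σ s) = s := by
  obtain ⟨e, hec, hei⟩ := exists_cont_inj_real
  have hem : MeasurableEmbedding e := hec.measurableEmbedding hei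
  classical
  -- choose minimiser
  have hmin : ∀ s ∈ f '' K, ∃ z ∈ K, f z = s ∧ ∀ z' ∈ K, f z' = s → e z ≤ e z' := by
    rintro s ⟨z, hz, rfl⟩
    have hc : IsCompact (K ∩ f ⁻¹' {f z}) :=
      hK.inter_right (isClosed_singleton.preimage hf)
    obtain ⟨w, hw, hw'⟩ := hc.exists_isMinOn ⟨z, hz, rfl⟩ hec.continuousOn
    exact ⟨w, hw.1, hw.2, fun z' h1 h2 => hw' ⟨h1, h2⟩⟩
  choose! m hm1 hm2 hm3 using hmin
  have hKm : MeasurableSet (f '' K) := (hK.image hf).isClosed.measurableSet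
  let z0 : ℕ → ℕ := fun _ => 0
  let σ : S → (ℕ → ℕ) := fun s => if s ∈ f '' K then m s else z0
  refine ⟨σ, ?_, fun s hs => by simp only [σ, if_pos hs]; exact hm2 s hs⟩
  rw [← hem.measurable_comp_iff]
  refine measurable_of_Iic fun a => ?_
  have : (e ∘ σ) ⁻¹' Iic a = (f '' (K ∩ e ⁻¹' Iic a)) ∪ ((f '' K)ᶜ ∩ {s | e z0 ≤ a}) := by
    ext s
    simp only [mem_preimage, Function.comp, mem_Iic, mem_union, mem_inter_iff, mem_compl_iff,
      mem_setOf_eq, σ]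
    by_cases hs : s ∈ f '' K
    · simp only [if_pos hs, hs, not_true_eq_false, false_and, or_false]
      constructor
      · intro h
        exact ⟨m s, ⟨hm1 s hs, h⟩, hm2 s hs⟩
      · rintro ⟨z, ⟨hz, hz'⟩, rfl⟩
        exact (hm3 _ hs z hz rfl).trans hz'
    · simp only [if_neg hs, hs, not_false_eq_true, true_and]
      constructor
      · exact fun h => Or.inr h
      · rintro (⟨z, ⟨hz, _⟩, rfl⟩ | h)
        · exact absurd ⟨z, hz, rfl⟩ hs
        · exact h
  rw [this]
  refine MeasurableSet.union ?_ (hKm.compl.inter (MeasurableSet.const _))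
  exact ((hK.inter_right (isClosed_Iic.preimage hec)).image hf).isClosed.measurableSet

/-- capacitability -/
lemma exists_compact_capacity {S : Type*} [TopologicalSpace S] [PolishSpace S] [MeasurableSpace S]
    [BorelSpace S] (μ : Measure S) [IsFiniteMeasure μ] (f : (ℕ → ℕ) → S) (hf : Continuous f)
    (c : ℝ≥0∞) (hc : c < μ (range f)) :
    ∃ K : Set (ℕ → ℕ), IsCompact K ∧ c ≤ μ (f '' K) := by
  letI := TopologicalSpace.upgradeIsCompletelyMetrizable S
  let N : (ℕ → ℕ) → ℕ → Set (ℕ → ℕ) := fun k n => {σ | ∀ i < n, σ i ≤ k i}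
  -- step
  have step : ∀ (A : Set (ℕ → ℕ)) (n : ℕ), c < μ (f '' A) →
      ∃ j, c < μ (f '' (A ∩ {σ | σ n ≤ j})) := by
    intro A n h
    have hU : f '' A = ⋃ j : ℕ, f '' (A ∩ {σ | σ n ≤ j}) := by
      rw [← image_iUnion, ← inter_iUnion]
      congr 1
      have : (⋃ j : ℕ, {σ : ℕ → ℕ | σ n ≤ j}) = univ := by
        ext σ; simp only [mem_iUnion, mem_setOf_eq, mem_univ, iff_true]; exact ⟨σ n, le_rfl⟩
      rw [this, inter_univ]
    have hmono : Monotone fun j : ℕ => f '' (A ∩ {σ | σ n ≤ j}) := by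
      intro i j hij
      exact image_mono (inter_subset_inter_right _ fun σ (h : σ n ≤ i) => le_trans h hij)
    rw [hU, hmono.measure_iUnion] at h
    exact lt_iSup_iff.mp h
  -- recursion producing sets
  let T := {A : Set (ℕ → ℕ) // c < μ (f '' A)}
  choose! J hJ using step
  let B : ℕ → Set (ℕ → ℕ) := fun n => Nat.rec univ (fun n A => A ∩ {σ | σ n ≤ J A n}) n
  have hB : ∀ n, c < μ (f '' (B n)) := by
    intro n
    induction n with
    | zero => simpa [B] using hc
    | succ n ih => exact hJ _ _ ih
  let k : ℕ → ℕ := fun n => J (B n) n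
  have hBN : ∀ n, B n = N k n := by
    intro n
    induction n with
    | zero => simp [B, N]
    | succ n ih =>
      have : B (n+1) = B n ∩ {σ | σ n ≤ k n} := rfl
      rw [this, ih]
      ext σ
      simp only [N, mem_inter_iff, mem_setOf_eq]
      constructor
      · rintro ⟨h1, h2⟩ i hi
        rcases Nat.lt_succ_iff_lt_or_eq.mp hi with h | h
        · exact h1 i h
        · exact h ▸ h2
      · intro h
        exact ⟨fun i hi => h i (by omega), h n (by omega)⟩
  let K : Set (ℕ → ℕ) := Set.pi univ fun i => Iic (k i)
  have hK : IsCompact K := isCompact_univ_pi fun i => (Set.finite_Iic (k i)).isCompact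
  refine ⟨K, hK, ?_⟩
  have hsub : (⋂ n, closure (f '' (B n))) ⊆ f '' K := by
    intro s hs
    rw [mem_iInter] at hs
    have : ∀ n : ℕ, ∃ σ ∈ B n, dist (f σ) s < 1 / (n + 1 : ℝ) := by
      intro n
      obtain ⟨y, ⟨σ, hσ, rfl⟩, hd⟩ := Metric.mem_closure_iff.mp (hs n) (1 / (n+1 : ℝ)) (by positivity)
      exact ⟨σ, hσ, by rwa [dist_comm]⟩
    choose σ hσB hσd using this
    have hlim : Tendsto (fun n => f (σ n)) atTop (𝓝 s) := by
      rw [tendsto_iff_dist_tendsto_zero]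
      exact squeeze_zero (fun _ => dist_nonneg) (fun n => (hσd n).le)
        tendsto_one_div_add_atTop_nhds_zero_nat
    -- truncated sequence in a compact set
    let M : ℕ → ℕ := fun i => (Finset.range (i+1)).sup (fun n => σ n i) + k i
    have hM : ∀ n, σ n ∈ Set.pi univ fun i => Iic (M i) := by
      intro n i _
      simp only [mem_Iic, M]
      by_cases h : i < n
      · have := hσB n
        rw [hBN] at this
        exact (this i h).trans (Nat.le_add_left _ _)
      · have : σ n i ≤ (Finset.range (i+1)).sup (fun n => σ n i) :=
          Finset.le_sup (f := fun n => σ n i) (Finset.mem_range.mpr (by omega))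
        omega
    have hKM : IsCompact (Set.pi univ fun i => Iic (M i)) :=
      isCompact_univ_pi fun i => (Set.finite_Iic (M i)).isCompact
    obtain ⟨τ, -, φ, hφ, hτ⟩ := hKM.isSeqCompact hM
    refine ⟨τ, ?_, ?_⟩
    · intro i _
      have h1 : Tendsto (fun n => σ (φ n) i) atTop (𝓝 (τ i)) := (tendsto_pi_nhds.mp hτ) i
      refine le_of_tendsto h1 ?_
      filter_upwards [eventually_gt_atTop i] with n hn
      have := hσB (φ n)
      rw [hBN] at this
      exact this i (lt_of_lt_of_le hn (hφ.id_le n))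
    · exact tendsto_nhds_unique ((hf.tendsto τ).comp hτ) (hlim.comp hφ.tendsto_atTop)
  have hanti : Antitone fun n => closure (f '' (B n)) := by
    refine antitone_nat_of_succ_le fun n => closure_mono (image_mono ?_)
    exact inter_subset_left
  refine le_trans ?_ (measure_mono hsub)
  rw [hanti.measure_iInter (fun n => isClosed_closure.nullMeasurableSet)
    ⟨0, measure_ne_top _ _⟩]
  exact le_iInf fun n => (hB n).le.trans (measure_mono subset_closure)

/-- Jankov-von Neumann selection -/
lemma exists_selection {S Z : Type*} [MeasurableSpace S] [StandardBorelSpace S]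
    [MeasurableSpace Z] [StandardBorelSpace Z] [Nonempty Z] (μ : Measure S) [IsFiniteMeasure μ]
    (B : Set (S × Z)) (hB : MeasurableSet B) :
    ∃ σ : S → Z, Measurable σ ∧ ∀ᵐ s ∂μ, (∃ z, (s, z) ∈ B) → (s, σ s) ∈ B := by
  classical
  letI := upgradeStandardBorel S
  letI := upgradeStandardBorel Z
  obtain ⟨z0⟩ := ‹Nonempty Z›
  have hBa : AnalyticSet B := hB.analyticSet
  rw [AnalyticSet] at hBa
  rcases hBa with rfl | ⟨g, hg, rfl⟩
  · exact ⟨fun _ => z0, measurable_const, ae_of_all _ (by simp)⟩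
  let f : (ℕ → ℕ) → S := fun x => (g x).1
  have hf : Continuous f := continuous_fst.comp hg
  have key : ∀ c : ℝ≥0∞, c < μ (range f) → ∃ (A : Set S) (σ : S → Z), MeasurableSet A ∧
      Measurable σ ∧ c ≤ μ A ∧ ∀ s ∈ A, (s, σ s) ∈ range g := by
    intro c hc
    obtain ⟨K, hK, hcK⟩ := exists_compact_capacity μ f hf c hc
    obtain ⟨σ, hσ, hσ'⟩ := exists_section_compact f hf K hK
    refine ⟨f '' K, fun s => (g (σ s)).2, (hK.image hf).isClosed.measurableSet,
      (continuous_snd.comp hg).measurable.comp hσ, hcK, fun s hs => ⟨σ s, ?_⟩⟩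
    exact Prod.ext (hσ' s hs) rfl
  by_cases h0 : μ (range f) = 0
  · refine ⟨fun _ => z0, measurable_const, ?_⟩
    have : ∀ᵐ s ∂μ, s ∉ range f := by
      rw [ae_iff]; simpa using! h0
    filter_upwards [this] with s hs
    rintro ⟨z, x, hx⟩
    exact absurd ⟨x, by simp [f, hx]⟩ hs
  obtain ⟨c, -, hc, hclim⟩ := exists_seq_strictMono_tendsto' (pos_iff_ne_zero.mpr h0)
  choose A σ hA hσ hcA hAσ using fun n => key (c n) (hc n).2
  let τ : S → Z := fun s => if h : ∃ n, s ∈ A n then σ (Nat.find h) s else z0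
  have hτm : Measurable τ := by
    have hU : MeasurableSet {s | ∃ n, s ∈ A n} := by
      have : {s | ∃ n, s ∈ A n} = ⋃ n, A n := by ext; simp
      rw [this]; exact MeasurableSet.iUnion hA
    let p : ℕ → S → Prop := fun n s => n = 0 ∧ s ∉ (⋃ n, A n) ∨ s ∈ A n
    intro t ht
    have : τ ⁻¹' t = (⋃ n, ((A n \ ⋃ i < n, A i) ∩ σ n ⁻¹' t)) ∪ ({s | ∃ n, s ∈ A n}ᶜ ∩ {s | z0 ∈ t}) := by
      ext s
      simp only [mem_preimage, mem_union, mem_iUnion, mem_inter_iff, mem_diff, mem_compl_iff,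
        mem_setOf_eq, τ]
      by_cases h : ∃ n, s ∈ A n
      · simp only [dif_pos h, h, not_true_eq_false, false_and, or_false]
        constructor
        · intro hs
          refine ⟨Nat.find h, ⟨Nat.find_spec h, ?_⟩, hs⟩
          rintro ⟨i, hi, hi'⟩
          exact Nat.find_min h hi hi'
        · rintro ⟨n, ⟨hn, hn'⟩, hs⟩
          have : Nat.find h = n := by
            rw [Nat.find_eq_iff]
            exact ⟨hn, fun i hi hi' => hn' ⟨i, hi, hi'⟩⟩
          simp only [dite_true, this]
          exact hs
      · simp only [dif_neg h, h, not_false_eq_true, true_and]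
        constructor
        · exact Or.inr
        · rintro (⟨n, ⟨hn, _⟩, _⟩ | h')
          · exact absurd ⟨n, hn⟩ h
          · exact h'
    rw [this]
    refine MeasurableSet.union (MeasurableSet.iUnion fun n => ?_) (hU.compl.inter (MeasurableSet.const _))
    exact ((hA n).diff (MeasurableSet.biUnion (Set.to_countable _) fun i _ => hA i)).inter (hσ n ht)
  refine ⟨τ, hτm, ?_⟩
  have hsubA : (⋃ n, A n) ⊆ range f := by
    intro s hs
    obtain ⟨n, hn⟩ := mem_iUnion.mp hs
    obtain ⟨x, hx⟩ := hAσ n s hn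
    exact ⟨x, by simp [f, hx]⟩
  have hnull : μ (range f \ ⋃ n, A n) = 0 := by
    rw [measure_diff hsubA (MeasurableSet.iUnion hA).nullMeasurableSet (measure_ne_top _ _)]
    rw [tsub_eq_zero_iff_le]
    exact le_of_tendsto' hclim fun n => (hcA n).trans (measure_mono (subset_iUnion A n))
  have : ∀ᵐ s ∂μ, s ∉ range f \ ⋃ n, A n := by
    exact measure_eq_zero_iff_ae_notMem.mp hnull
  filter_upwards [this] with s hs
  rintro ⟨z, x, hx⟩
  have hsf : s ∈ range f := ⟨x, by simp [f, hx]⟩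
  have h : ∃ n, s ∈ A n := by
    by_contra hcon
    exact hs ⟨hsf, by simpa using hcon⟩
  simp only [τ, dif_pos h]
  exact hAσ _ s (Nat.find_spec h)

lemma selection_inf {S Z : Type*} [MeasurableSpace S] [StandardBorelSpace S]
    [MeasurableSpace Z] [StandardBorelSpace Z] [Nonempty Z] (μ : Measure S) [IsFiniteMeasure μ]
    (F : S × Z → ℝ≥0∞) (hF : Measurable F) :
    AEMeasurable (fun s => ⨅ z, F (s, z)) μ ∧
    ∀ ε : ℝ≥0∞, 0 < ε → ∃ σ : S → Z, Measurable σ ∧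
      ∀ᵐ s ∂μ, F (s, σ s) ≤ (⨅ z, F (s, z)) + ε := by
  have hae : AEMeasurable (fun s => ⨅ z, F (s, z)) μ := by
    refine NullMeasurable.aemeasurable ?_
    have : ∀ a : ℝ≥0∞, NullMeasurableSet ((fun s => ⨅ z, F (s, z)) ⁻¹' Iio a) μ := by
      intro a
      obtain ⟨σ, hσ, h⟩ := exists_selection μ (F ⁻¹' Iio a) (hF measurableSet_Iio)
      have hm : MeasurableSet {s | F (s, σ s) < a} :=
        (hF.comp (measurable_id.prodMk hσ)) measurableSet_Iio
      refine hm.nullMeasurableSet.congr ?_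
      filter_upwards [h] with s hs
      refine propext ⟨fun (h' : s ∈ {s | F (s, σ s) < a}) => ?_,
        fun (h' : s ∈ (fun s => ⨅ z, F (s, z)) ⁻¹' Iio a) => ?_⟩
      · change (⨅ z, F (s, z)) < a
        exact lt_of_le_of_lt (iInf_le _ (σ s)) h'
      · have h' : (⨅ z, F (s, z)) < a := h'
        obtain ⟨z, hz⟩ := iInf_lt_iff.mp h'
        exact hs ⟨z, hz⟩
    exact (measurable_of_Iio (δ := NullMeasurableSpace S μ) this)
  refine ⟨hae, fun ε hε => ?_⟩
  obtain ⟨σ, hσ, h⟩ := exists_selection μ {x : S × Z | F x ≤ hae.mk _ x.1 + ε}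
    (measurableSet_le hF ((hae.measurable_mk.comp measurable_fst).add_const _))
  refine ⟨σ, hσ, ?_⟩
  filter_upwards [h, hae.ae_eq_mk] with s hs he
  rw [he]
  apply hs
  change ∃ z, F (s, z) ≤ hae.mk _ s + ε
  rw [← he]
  by_cases ht : (⨅ z, F (s, z)) = ⊤
  · exact ⟨Classical.arbitrary Z, by rw [ht]; simp⟩
  · obtain ⟨z, hz⟩ := iInf_lt_iff.mp (ENNReal.lt_add_right ht hε.ne')
    exact ⟨z, hz.le⟩

end WOTaux

namespace WOTaux

theorem measurable_PM_of {S T : Type*} [MeasurableSpace S] [MeasurableSpace T]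
    {f : S → ProbabilityMeasure T} (h : Measurable fun s => (f s : Measure T)) : Measurable f :=
  Measurable.subtype_mk (h := fun s => (f s).2) h

theorem measurable_PM_coe {T : Type*} [MeasurableSpace T] :
    Measurable fun p : ProbabilityMeasure T => (p : Measure T) := measurable_subtype_coe

def cdfRat {T : Type*} [MeasurableSpace T] [StandardBorelSpace T] (p : ProbabilityMeasure T) :
    ℚ → ℝ := fun q => ((p : Measure T).map (embeddingReal T)).real (Iic (q : ℝ))

theorem measurable_cdfRat {T : Type*} [MeasurableSpace T] [StandardBorelSpace T] :
    Measurable (cdfRat (T := T)) := by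
  refine measurable_pi_lambda _ fun q => ?_
  refine Measurable.ennreal_toReal ?_
  have h1 : Measurable fun p : ProbabilityMeasure T => (p : Measure T) := measurable_subtype_coe
  exact (Measure.measurable_coe measurableSet_Iic).comp
    ((Measure.measurable_map _ (measurable_embeddingReal T)).comp h1)

theorem stieltjes_cdfRat {T : Type*} [MeasurableSpace T] [StandardBorelSpace T]
    (p : ProbabilityMeasure T) :
    (ProbabilityTheory.stieltjesOfMeasurableRat (id : (ℚ → ℝ) → ℚ → ℝ) measurable_id
      (cdfRat p)).measure = (p : Measure T).map (embeddingReal T) := by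
  set m : Measure ℝ := (p : Measure T).map (embeddingReal T) with hm
  haveI : IsProbabilityMeasure m :=
    Measure.isProbabilityMeasure_map (measurable_embeddingReal T).aemeasurable
  have hcd : ∀ q : ℚ, cdfRat p q = ProbabilityTheory.cdf m q := fun q => by
    rw [ProbabilityTheory.cdf_eq_real]; rfl
  have hS : ProbabilityTheory.IsRatStieltjesPoint (id : (ℚ → ℝ) → ℚ → ℝ) (cdfRat p) := by
    constructor
    · intro a b hab
      simp only [id, hcd]
      exact ProbabilityTheory.monotone_cdf m (by exact_mod_cast hab)
    · simp only [id]
      rw [show cdfRat p = fun q : ℚ => ProbabilityTheory.cdf m q from funext hcd]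
      exact (ProbabilityTheory.tendsto_cdf_atTop m).comp (tendsto_ratCast_atTop_iff.2 tendsto_id)
    · simp only [id]
      rw [show cdfRat p = fun q : ℚ => ProbabilityTheory.cdf m q from funext hcd]
      exact (ProbabilityTheory.tendsto_cdf_atBot m).comp (tendsto_ratCast_atBot_iff.2 tendsto_id)
    · intro t
      simp only [id, hcd]
      rw [← StieltjesFunction.iInf_rat_gt_eq (ProbabilityTheory.cdf m) t]
      refine Equiv.iInf_congr (Equiv.subtypeEquivRight fun q => ?_) fun q => rfl
      simp
  set f := (ProbabilityTheory.stieltjesOfMeasurableRat (id : (ℚ → ℝ) → ℚ → ℝ) measurable_id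
      (cdfRat p)) with hf
  have heq : f = ProbabilityTheory.cdf m := by
    refine StieltjesFunction.ext fun x => ?_
    have h1 := StieltjesFunction.iInf_rat_gt_eq f x
    have h2 := StieltjesFunction.iInf_rat_gt_eq (ProbabilityTheory.cdf m) x
    rw [← h1, ← h2]
    congr 1
    funext q
    rw [hf, ProbabilityTheory.stieltjesOfMeasurableRat_eq,
      ProbabilityTheory.toRatCDF_of_isRatStieltjesPoint hS]
    exact hcd q
  rw [heq, ProbabilityTheory.measure_cdf]

theorem standardBorel_PM (T : Type*) [MeasurableSpace T] [StandardBorelSpace T] :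
    StandardBorelSpace (ProbabilityMeasure T) := by
  rcases isEmpty_or_nonempty (ProbabilityMeasure T) with hE | ⟨⟨p0⟩⟩
  · haveI : Countable (ProbabilityMeasure T) := inferInstance
    haveI : DiscreteMeasurableSpace (ProbabilityMeasure T) :=
      ⟨fun s => by rw [Set.eq_empty_of_isEmpty s]; exact MeasurableSet.empty⟩
    infer_instance
  classical
  have he := measurableEmbedding_embeddingReal T
  let κ0 : (ℚ → ℝ) → Measure T := fun s =>
    ((ProbabilityTheory.stieltjesOfMeasurableRat (id : (ℚ → ℝ) → ℚ → ℝ) measurable_id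
      s).measure).comap (embeddingReal T)
  have hκ0 : Measurable κ0 := by
    refine Measure.measurable_of_measurable_coe _ fun A hA => ?_
    have : ∀ s, κ0 s A = (ProbabilityTheory.stieltjesOfMeasurableRat
      (id : (ℚ → ℝ) → ℚ → ℝ) measurable_id s).measure (embeddingReal T '' A) := fun s =>
      he.comap_apply _ _
    simp only [this]
    exact (Measure.measurable_coe (he.measurableSet_image.2 hA)).comp
      (ProbabilityTheory.measurable_measure_stieltjesOfMeasurableRat _)
  have hκc : ∀ p : ProbabilityMeasure T, κ0 (cdfRat p) = p := by
    intro p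
    show Measure.comap _ _ = _
    rw [stieltjes_cdfRat, he.comap_map]
  have hms : MeasurableSet {s | IsProbabilityMeasure (κ0 s)} := by
    have : {s | IsProbabilityMeasure (κ0 s)} = {s | κ0 s univ = 1} := by
      ext s; exact isProbabilityMeasure_iff
    rw [this]
    exact ((Measure.measurable_coe MeasurableSet.univ).comp hκ0) (measurableSet_singleton 1)
  let κ : (ℚ → ℝ) → ProbabilityMeasure T := fun s =>
    if h : IsProbabilityMeasure (κ0 s) then ⟨κ0 s, h⟩ else p0
  have hκ : Measurable κ := by
    have h1 : Measurable (fun s => if IsProbabilityMeasure (κ0 s) then κ0 s else (p0 : Measure T)) :=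
      Measurable.ite hms hκ0 measurable_const
    refine measurable_PM_of ?_
    convert h1 using 2 with s
    by_cases h : IsProbabilityMeasure (κ0 s) <;> simp [κ, h]
  have hleft : ∀ p, κ (cdfRat p) = p := by
    intro p
    have : IsProbabilityMeasure (κ0 (cdfRat p)) := by rw [hκc]; infer_instance
    have h2 : κ (cdfRat p) = ⟨κ0 (cdfRat p), this⟩ := dif_pos this
    rw [h2]
    exact Subtype.ext (hκc p)
  have hrange : MeasurableSet (range (cdfRat (T := T))) := by
    have : range (cdfRat (T := T)) = {s | cdfRat (κ s) = s} := by
      ext s; constructor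
      · rintro ⟨p, rfl⟩; show cdfRat (κ _) = _; rw [hleft]
      · intro h; exact ⟨_, h⟩
    rw [this]
    exact measurableSet_eq_fun (measurable_cdfRat.comp hκ) measurable_id
  have hemb : MeasurableEmbedding (cdfRat (T := T)) :=
    MeasurableEmbedding.of_measurable_inverse measurable_cdfRat hrange hκ hleft
  haveI := hrange.standardBorel
  obtain ⟨t, hb, hpol⟩ := (hrange.standardBorel).polish
  let e := hemb.equivRange
  refine ⟨TopologicalSpace.induced e t, ?_, ?_⟩
  · refine @BorelSpace.mk _ (TopologicalSpace.induced e t) _ ?_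
    refine Eq.trans ?_ (@borel_comap _ _ e t).symm
    rw [← @BorelSpace.measurable_eq _ t _ hb]
    refine le_antisymm ?_ e.measurable.comap_le
    intro A hA
    exact ⟨e.symm ⁻¹' A, e.symm.measurable hA, by ext; simp⟩
  · exact @Equiv.polishSpace_induced _ _ t hpol e.toEquiv
end WOTaux

namespace WOTaux

def GG (Y : Type*) [TopologicalSpace Y] [SecondCountableTopology Y] : Set (Set Y) :=
  (fun s : Set (Set Y) => ⋃₀ s) ''
    {s : Set (Set Y) | s.Finite ∧ s ⊆ TopologicalSpace.countableBasis Y}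

section
variable {Y : Type*} [TopologicalSpace Y] [SecondCountableTopology Y]

theorem GG_countable : (GG Y).Countable :=
  (Set.countable_setOf_finite_subset (TopologicalSpace.countable_countableBasis Y)).image _

theorem GG_open {G : Set Y} (h : G ∈ GG Y) : IsOpen G := by
  obtain ⟨s, ⟨_, hs⟩, rfl⟩ := h
  exact isOpen_sUnion fun t ht =>
    (TopologicalSpace.isBasis_countableBasis Y).isOpen (hs ht)

variable [MeasurableSpace Y]

theorem GG_exists_lt (μ : ProbabilityMeasure Y) {G : Set Y} (hG : IsOpen G) {c : ℝ≥0∞}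
    (hc : c < (μ : Measure Y) G) : ∃ G' ∈ GG Y, G' ⊆ G ∧ c < (μ : Measure Y) G' := by
  lift c to ℝ≥0 using (hc.trans_le le_top).ne
  have hc' : c < μ G := by
    rw [← ProbabilityMeasure.ennreal_coeFn_eq_coeFn_toMeasure] at hc
    exact_mod_cast hc
  obtain ⟨T, hT, h1, h2⟩ := μ.exists_lt_measure_biUnion_of_isOpen
    (S := TopologicalSpace.countableBasis Y) (fun u hu x hx => by
      obtain ⟨v, hv, hxv, hvu⟩ :=
        (TopologicalSpace.isBasis_countableBasis Y).exists_subset_of_mem_open hx hu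
      exact ⟨v, hv, ((TopologicalSpace.isBasis_countableBasis Y).isOpen hv).mem_nhds hxv, hvu⟩)
    hG hc'
  refine ⟨⋃ t ∈ T, t, ⟨(T : Set (Set Y)), ⟨T.finite_toSet, fun t ht => hT t ht⟩, ?_⟩, h2, ?_⟩
  · simp [sUnion_eq_biUnion]
  · rw [← ProbabilityMeasure.ennreal_coeFn_eq_coeFn_toMeasure]
    exact_mod_cast h1

theorem tendsto_of_GG [OpensMeasurableSpace Y] {ι : Type*} {L : Filter ι}
    [L.IsCountablyGenerated] {μ : ProbabilityMeasure Y} {μs : ι → ProbabilityMeasure Y}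
    (h : ∀ G ∈ GG Y, (μ : Measure Y) G ≤ L.liminf fun i => (μs i : Measure Y) G) :
    Tendsto μs L (𝓝 μ) := by
  refine tendsto_of_forall_isOpen_le_liminf' fun G hG => ?_
  refine le_of_forall_lt fun c hc => ?_
  obtain ⟨G', hG', hsub, hc'⟩ := GG_exists_lt μ hG hc
  calc c < _ := hc'
    _ ≤ _ := h G' hG'
    _ ≤ _ := liminf_le_liminf (Eventually.of_forall fun i => measure_mono hsub)

def subb (Y : Type*) [TopologicalSpace Y] [SecondCountableTopology Y] [MeasurableSpace Y] :
    Set (Set (ProbabilityMeasure Y)) :=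
  (fun a : Set Y × ℚ => {μ : ProbabilityMeasure Y | (Real.toNNReal a.2 : ℝ≥0∞) < (μ : Measure Y) a.1}) ''
    (GG Y ×ˢ univ)

theorem subb_countable : (subb Y).Countable :=
  (GG_countable.prod countable_univ).image _

variable [TopologicalSpace.PseudoMetrizableSpace Y]

theorem isOpen_lt_measure [OpensMeasurableSpace Y] {G : Set Y} (hG : IsOpen G) (c : ℝ≥0∞) :
    IsOpen {μ : ProbabilityMeasure Y | c < (μ : Measure Y) G} := by
  letI := TopologicalSpace.pseudoMetrizableSpacePseudoMetric Y
  rw [isOpen_iff_mem_nhds]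
  intro μ hμ
  have h := ProbabilityMeasure.le_liminf_measure_open_of_tendsto
    (tendsto_id (x := 𝓝 μ)) hG
  exact eventually_lt_of_lt_liminf (lt_of_lt_of_le hμ h)

theorem topology_PM [OpensMeasurableSpace Y] :
    (inferInstance : TopologicalSpace (ProbabilityMeasure Y)) =
      TopologicalSpace.generateFrom (subb Y) := by
  refine le_antisymm ?_ ?_
  · refine le_generateFrom ?_
    rintro _ ⟨⟨G, q⟩, ⟨hG, _⟩, rfl⟩
    exact isOpen_lt_measure (GG_open hG) _
  · have hsc : @SecondCountableTopology _ (TopologicalSpace.generateFrom (subb Y)) :=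
      @SecondCountableTopology.mk _ (TopologicalSpace.generateFrom (subb Y))
        ⟨subb Y, subb_countable, rfl⟩
    refine le_of_nhds_le_nhds fun μ => ?_
    haveI : (@nhds _ (TopologicalSpace.generateFrom (subb Y)) μ).IsCountablyGenerated :=
      @FirstCountableTopology.nhds_generated_countable _
        (TopologicalSpace.generateFrom (subb Y)) _ μ
    refine tendsto_of_GG (L := @nhds _ (TopologicalSpace.generateFrom (subb Y)) μ)
      (μs := id) fun G hG => ?_
    refine le_of_forall_lt fun c hc => ?_
    obtain ⟨c', hc1, hc2⟩ := exists_between hc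
    obtain ⟨q, _, hq1, hq2⟩ := ENNReal.lt_iff_exists_rat_btwn.1 hc2
    refine lt_of_lt_of_le hc1 (hq1.le.trans ?_)
    refine le_liminf_of_le (by isBoundedDefault) ?_
    have : {ν : ProbabilityMeasure Y | (Real.toNNReal q : ℝ≥0∞) < (ν : Measure Y) G} ∈
        @nhds _ (TopologicalSpace.generateFrom (subb Y)) μ :=
      @IsOpen.mem_nhds _ (TopologicalSpace.generateFrom (subb Y)) _ _
        (TopologicalSpace.isOpen_generateFrom_of_mem ⟨(G, q), ⟨hG, mem_univ _⟩, rfl⟩) hq2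
    filter_upwards [this] with ν hν
    exact le_of_lt hν

theorem secondCountable_PM [OpensMeasurableSpace Y] :
    SecondCountableTopology (ProbabilityMeasure Y) :=
  ⟨subb Y, subb_countable, topology_PM⟩

theorem borelSpace_PM [BorelSpace Y] : BorelSpace (ProbabilityMeasure Y) := by
  haveI := secondCountable_PM (Y := Y)
  refine ⟨le_antisymm ?_ ?_⟩
  · have h : @Measurable _ _ (borel (ProbabilityMeasure Y)) _
        (fun p : ProbabilityMeasure Y => (p : Measure Y)) := by
      letI : MeasurableSpace (ProbabilityMeasure Y) := borel _
      haveI : BorelSpace (ProbabilityMeasure Y) := ⟨rfl⟩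
      refine Measurable.measure_of_isPiSystem_of_isProbabilityMeasure (S := {s | IsOpen s})
        ?_ isPiSystem_isOpen ?_
      · exact BorelSpace.measurable_eq
      · intro G hG
        exact measurable_of_Ioi fun c => (isOpen_lt_measure hG c).measurableSet
    exact fun s hs => by
      obtain ⟨t, ht, rfl⟩ := hs
      exact h ht
  · rw [borel_eq_generateFrom_of_subbasis (topology_PM (Y := Y))]
    refine MeasurableSpace.generateFrom_le ?_
    rintro _ ⟨⟨G, q⟩, ⟨hG, _⟩, rfl⟩
    exact measurableSet_lt measurable_const
      ((Measure.measurable_coe (GG_open hG).measurableSet).comp measurable_PM_coe)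
end
end WOTaux

namespace WOTaux
open WOT

def mom {Y : Type*} [MeasurableSpace Y] [PseudoMetricSpace Y] (r : ℝ) (y₀ : Y) (p : Measure Y) :
    ℝ≥0∞ := ∫⁻ y, ENNReal.ofReal (dist y y₀ ^ r) ∂p

section
variable {Y : Type*} [MeasurableSpace Y] [MetricSpace Y] [SecondCountableTopology Y] [BorelSpace Y]

theorem measurable_cost (r : ℝ) (y₀ : Y) :
    Measurable fun y : Y => ENNReal.ofReal (dist y y₀ ^ r) :=
  ENNReal.measurable_ofReal.comp ((measurable_id.dist measurable_const).pow_const r)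

theorem measurable_cost2 (r : ℝ) :
    Measurable fun z : Y × Y => ENNReal.ofReal (dist z.1 z.2 ^ r) :=
  ENNReal.measurable_ofReal.comp ((measurable_fst.dist measurable_snd).pow_const r)

theorem measurable_mom (r : ℝ) (y₀ : Y) : Measurable (mom (Y := Y) r y₀) :=
  Measure.measurable_lintegral (measurable_cost r y₀)

theorem mem_Pr {r : ℝ} {y₀ : Y} {p : Measure Y} :
    p ∈ Pr r y₀ ↔ IsProbabilityMeasure p ∧ mom r y₀ p < ⊤ := Iff.rfl

theorem measurableSet_isPM {T : Type*} [MeasurableSpace T] :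
    MeasurableSet {p : Measure T | IsProbabilityMeasure p} := by
  have : {p : Measure T | IsProbabilityMeasure p} = {p | p univ = 1} := by
    ext s; exact isProbabilityMeasure_iff
  rw [this]
  exact (Measure.measurable_coe MeasurableSet.univ) (measurableSet_singleton 1)

theorem measurableSet_Pr (r : ℝ) (y₀ : Y) : MeasurableSet (Pr (Y := Y) r y₀) :=
  measurableSet_isPM.inter (measurableSet_lt (measurable_mom r y₀) measurable_const)

theorem Wr_dirac {r : ℝ} (hr : 1 ≤ r) (y₀ : Y) (p : Measure Y) [IsProbabilityMeasure p] :
    Wr r p (Measure.dirac y₀) ^ r = mom r y₀ p := by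
  have hr0 : 0 < r := by linarith
  have key : ∀ π ∈ Couplings p (Measure.dirac y₀),
      ∫⁻ z : Y × Y, ENNReal.ofReal (dist z.1 z.2 ^ r) ∂π = mom r y₀ p := by
    rintro π ⟨h1, h2⟩
    have hae : ∀ᵐ z ∂π, z.2 = y₀ := by
      have : ∀ᵐ y ∂(π.map Prod.snd), y = y₀ := by
        rw [h2, ae_dirac_eq]; exact Filter.eventually_pure.2 rfl
      exact ae_of_ae_map measurable_snd.aemeasurable this
    rw [mom, ← h1, lintegral_map (measurable_cost r y₀) measurable_fst]
    refine lintegral_congr_ae ?_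
    filter_upwards [hae] with z hz
    rw [hz]
  have hne : p.prod (Measure.dirac y₀) ∈ Couplings p (Measure.dirac y₀) :=
    ⟨by rw [← Measure.fst, Measure.fst_prod], by rw [← Measure.snd, Measure.snd_prod]⟩
  have : Wr r p (Measure.dirac y₀) = (mom r y₀ p) ^ (1 / r) := by
    refine le_antisymm ?_ ?_
    · refine (iInf₂_le _ hne).trans ?_
      rw [key _ hne]
    · refine le_iInf₂ fun π hπ => ?_
      rw [key _ hπ]
  rw [this, ← ENNReal.rpow_mul, one_div_mul_cancel hr0.ne', ENNReal.rpow_one]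

theorem lintegral_mom_eq (r : ℝ) (y₀ : Y) (Q : Measure (Measure Y)) :
    ∫⁻ p, mom r y₀ p ∂Q = mom r y₀ Q.join :=
  (Measure.lintegral_join (measurable_cost r y₀).aemeasurable).symm

theorem mem_PrP {r : ℝ} (hr : 1 ≤ r) {y₀ : Y} {Q : Measure (Measure Y)}
    (hQ : IsProbabilityMeasure Q) (hP : ∀ᵐ p ∂Q, IsProbabilityMeasure p)
    (hj : Q.join ∈ Pr r y₀) : Q ∈ PrP r y₀ := by
  have h1 : ∫⁻ p, mom r y₀ p ∂Q < ⊤ := by rw [lintegral_mom_eq]; exact hj.2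
  refine ⟨hQ, ?_, ?_⟩
  · filter_upwards [hP, ae_lt_top (measurable_mom r y₀) h1.ne] with p h2 h3
    exact ⟨h2, h3⟩
  · refine lt_of_le_of_lt (le_of_eq (lintegral_congr_ae ?_)) h1
    filter_upwards [hP] with p hp
    exact Wr_dirac hr y₀ p
end

theorem exists_lift {T : Type*} [MeasurableSpace T] (Q : Measure (Measure T))
    [IsProbabilityMeasure Q] (h : ∀ᵐ p ∂Q, IsProbabilityMeasure p) :
    ∃ Q' : ProbabilityMeasure (ProbabilityMeasure T),
      (Q' : Measure (ProbabilityMeasure T)).map ProbabilityMeasure.toMeasure = Q := by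
  have hemb : MeasurableEmbedding (ProbabilityMeasure.toMeasure (Ω := T)) :=
    MeasurableEmbedding.subtype_coe measurableSet_isPM
  have hmap : (Q.comap (ProbabilityMeasure.toMeasure (Ω := T))).map
      ProbabilityMeasure.toMeasure = Q := by
    rw [hemb.map_comap]
    refine Measure.restrict_eq_self_of_ae_mem ?_
    filter_upwards [h] with p hp
    exact ⟨⟨p, hp⟩, rfl⟩
  refine ⟨⟨Q.comap (ProbabilityMeasure.toMeasure (Ω := T)), ?_⟩, hmap⟩
  have := congrArg (fun m => m univ) hmap
  rw [Measure.map_apply measurable_PM_coe MeasurableSet.univ] at this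
  exact ⟨by simpa using this⟩

def joinP {T : Type*} [MeasurableSpace T] (Q : ProbabilityMeasure (ProbabilityMeasure T)) :
    ProbabilityMeasure T :=
  ⟨((Q : Measure (ProbabilityMeasure T)).map ProbabilityMeasure.toMeasure).join, by
    constructor
    rw [Measure.join_apply MeasurableSet.univ, lintegral_map
      (Measure.measurable_coe MeasurableSet.univ) measurable_PM_coe]
    simp⟩

theorem joinP_coe {T : Type*} [MeasurableSpace T]
    (Q : ProbabilityMeasure (ProbabilityMeasure T)) : (joinP Q : Measure T) =
      ((Q : Measure (ProbabilityMeasure T)).map ProbabilityMeasure.toMeasure).join := rfl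

theorem measurable_joinP {T : Type*} [MeasurableSpace T] : Measurable (joinP (T := T)) :=
  measurable_PM_of (Measure.measurable_join.comp
    ((Measure.measurable_map _ measurable_PM_coe).comp measurable_PM_coe))

theorem lintegral_joinP {T : Type*} [MeasurableSpace T]
    (Q : ProbabilityMeasure (ProbabilityMeasure T)) {f : T → ℝ≥0∞} (hf : Measurable f) :
    ∫⁻ y, f y ∂(joinP Q : Measure T) =
      ∫⁻ p, ∫⁻ y, f y ∂(p : Measure T) ∂(Q : Measure (ProbabilityMeasure T)) := by
  rw [joinP_coe, Measure.lintegral_join hf.aemeasurable,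
    lintegral_map (Measure.measurable_lintegral hf) measurable_PM_coe]
end WOTaux

namespace WOTaux
open WOT

section
variable {Y : Type*} [MeasurableSpace Y] [MetricSpace Y] [SecondCountableTopology Y] [BorelSpace Y]

theorem cost_le {r : ℝ} (hr : 1 ≤ r) (y₀ y z : Y) :
    ENNReal.ofReal (dist y z ^ r) ≤
      2 ^ r * (ENNReal.ofReal (dist y y₀ ^ r) + ENNReal.ofReal (dist z y₀ ^ r)) := by
  have hr0 : 0 ≤ r := by linarith
  rw [← ENNReal.ofReal_rpow_of_nonneg dist_nonneg hr0,
    ← ENNReal.ofReal_rpow_of_nonneg dist_nonneg hr0,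
    ← ENNReal.ofReal_rpow_of_nonneg dist_nonneg hr0]
  have h1 : ENNReal.ofReal (dist y z) ≤ ENNReal.ofReal (dist y y₀) + ENNReal.ofReal (dist z y₀) := by
    rw [← ENNReal.ofReal_add dist_nonneg dist_nonneg]
    exact ENNReal.ofReal_le_ofReal (dist_triangle_right y z y₀)
  calc _ ≤ (ENNReal.ofReal (dist y y₀) + ENNReal.ofReal (dist z y₀)) ^ r :=
        ENNReal.rpow_le_rpow h1 hr0
    _ ≤ _ := ENNReal.rpow_add_le_mul_rpow_add_rpow _ _ hr
    _ ≤ _ := by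
      gcongr
      · norm_num
      · linarith

theorem coup_abs {r : ℝ} (hr : 1 ≤ r) (y₀ : Y) (μ ν : Measure Y) [IsProbabilityMeasure μ]
    [IsProbabilityMeasure ν] (τ : Measure (Y × Y)) (μ' ν' : Measure Y)
    (h1 : τ.map Prod.fst + μ' = μ) (h2 : τ.map Prod.snd + ν' = ν) :
    Wr r μ ν ^ r ≤ ∫⁻ z, ENNReal.ofReal (dist z.1 z.2 ^ r) ∂τ
      + 2 ^ r * (mom r y₀ μ' + mom r y₀ ν') := by
  have hr0 : 0 < r := by linarith
  have e1 : τ univ + μ' univ = 1 := by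
    have := congrArg (fun m => m univ) h1
    simpa [Measure.map_apply measurable_fst MeasurableSet.univ] using this
  have e2 : τ univ + ν' univ = 1 := by
    have := congrArg (fun m => m univ) h2
    simpa [Measure.map_apply measurable_snd MeasurableSet.univ] using this
  have hτ : τ univ ≠ ⊤ := fun h => by simp [h] at e1
  have hm : μ' univ = ν' univ := (ENNReal.add_right_inj hτ).1 (e1.trans e2.symm)
  have hmt : μ' univ ≠ ⊤ := fun h => by simp [h] at e1
  haveI : IsFiniteMeasure μ' := ⟨hmt.lt_top⟩
  haveI : IsFiniteMeasure ν' := ⟨(hm ▸ hmt).lt_top⟩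
  set m := μ' univ with hmdef
  set σ : Measure (Y × Y) := m⁻¹ • μ'.prod ν' with hσ
  have s1 : σ.map Prod.fst = μ' := by
    rw [hσ, Measure.map_smul, Measure.map_fst_prod, ← hm, smul_smul]
    by_cases h0 : m = 0
    · have : μ' = 0 := Measure.measure_univ_eq_zero.1 h0
      rw [this, smul_zero]
    · rw [ENNReal.inv_mul_cancel h0 hmt, one_smul]
  have s2 : σ.map Prod.snd = ν' := by
    rw [hσ, Measure.map_smul, Measure.map_snd_prod, smul_smul]
    by_cases h0 : m = 0
    · have : ν' = 0 := Measure.measure_univ_eq_zero.1 (hm ▸ h0)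
      rw [this, smul_zero]
    · rw [← hmdef, ENNReal.inv_mul_cancel h0 hmt, one_smul]
  have hcoup : τ + σ ∈ Couplings μ ν := by
    refine ⟨?_, ?_⟩
    · rw [Measure.map_add _ _ measurable_fst, s1, h1]
    · rw [Measure.map_add _ _ measurable_snd, s2, h2]
  have hW : Wr r μ ν ^ r ≤ ∫⁻ z : Y × Y, ENNReal.ofReal (dist z.1 z.2 ^ r) ∂(τ + σ) := by
    have : Wr r μ ν ≤ _ := iInf₂_le _ hcoup
    refine (ENNReal.rpow_le_rpow this hr0.le).trans ?_
    rw [← ENNReal.rpow_mul, one_div_mul_cancel hr0.ne', ENNReal.rpow_one]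
  refine hW.trans ?_
  rw [lintegral_add_measure]
  gcongr
  calc ∫⁻ z : Y × Y, ENNReal.ofReal (dist z.1 z.2 ^ r) ∂σ
      ≤ ∫⁻ z : Y × Y, 2 ^ r * (ENNReal.ofReal (dist z.1 y₀ ^ r)
          + ENNReal.ofReal (dist z.2 y₀ ^ r)) ∂σ := lintegral_mono fun z => cost_le hr y₀ _ _
    _ = 2 ^ r * (mom r y₀ μ' + mom r y₀ ν') := by
      have m1 : Measurable fun z : Y × Y => ENNReal.ofReal (dist z.1 y₀ ^ r) :=
        (measurable_cost r y₀).comp measurable_fst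
      have m2 : Measurable fun z : Y × Y => ENNReal.ofReal (dist z.2 y₀ ^ r) :=
        (measurable_cost r y₀).comp measurable_snd
      rw [lintegral_const_mul _ (by exact m1.add m2), lintegral_add_left m1]
      congr 2
      · rw [← lintegral_map (measurable_cost r y₀) measurable_fst, s1]; rfl
      · rw [← lintegral_map (measurable_cost r y₀) measurable_snd, s2]; rfl

theorem restrict_sum {μ : Measure Y} (s : Finset ℕ) (A : ℕ → Set Y)
    (hA : ∀ i, MeasurableSet (A i)) (hd : Pairwise (Function.onFun Disjoint A)) :
    (∑ i ∈ s, μ.restrict (A i)) + μ.restrict (⋃ i ∈ s, A i)ᶜ = μ := by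
  have h : μ.restrict (⋃ i ∈ s, A i) = ∑ i ∈ s, μ.restrict (A i) := by
    rw [Measure.restrict_biUnion_finset (fun i _ j _ hij => hd hij) hA, Measure.sum_fintype]
    exact Finset.sum_coe_sort s (fun i => μ.restrict (A i))
  rw [← h]
  exact Measure.restrict_add_restrict_compl (Finset.measurableSet_biUnion _ fun i _ => hA i)

theorem cell_term {m w R M : ℝ≥0∞} (hm : m ≠ ⊤) (hw : w ≤ m) (hM : M ≤ R * m) :
    (1 - w * m⁻¹) * M ≤ (m - w) * R := by
  by_cases h0 : m = 0
  · subst h0; simp at hM; simp [hM]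
  · calc (1 - w * m⁻¹) * M ≤ (1 - w * m⁻¹) * (R * m) := by gcongr
      _ = ((1 - w * m⁻¹) * m) * R := by ring
      _ = (m - w) * R := by
        rw [ENNReal.sub_mul (fun _ _ => hm), one_mul, mul_assoc, ENNReal.inv_mul_cancel h0 hm, mul_one]

theorem cell_bound {r : ℝ} (hr : 1 ≤ r) (y₀ : Y) (μ ν : Measure Y) [IsProbabilityMeasure μ]
    [IsProbabilityMeasure ν] (s : Finset ℕ) (A : ℕ → Set Y)
    (hA : ∀ i, MeasurableSet (A i)) (hd : Pairwise (Function.onFun Disjoint A)) (ε R : ℝ≥0∞)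
    (hε : ∀ i, ∀ y ∈ A i, ∀ z ∈ A i, ENNReal.ofReal (dist y z ^ r) ≤ ε)
    (hR : ∀ i ∈ s, ∀ y ∈ A i, ENNReal.ofReal (dist y y₀ ^ r) ≤ R) :
    Wr r μ ν ^ r ≤ ε + 2 ^ r *
      (((∑ i ∈ s, (μ (A i) - min (μ (A i)) (ν (A i))) * R) +
          mom r y₀ (μ.restrict (⋃ i ∈ s, A i)ᶜ)) +
       ((∑ i ∈ s, (ν (A i) - min (μ (A i)) (ν (A i))) * R) +
          mom r y₀ (ν.restrict (⋃ i ∈ s, A i)ᶜ))) := by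
  set w : ℕ → ℝ≥0∞ := fun i => min (μ (A i)) (ν (A i)) with hwdef
  set τ : Measure (Y × Y) := ∑ i ∈ s, (w i * (μ (A i))⁻¹ * (ν (A i))⁻¹) •
    (μ.restrict (A i)).prod (ν.restrict (A i)) with hτ
  have hw1 : ∀ i, w i ≤ μ (A i) := fun i => min_le_left _ _
  have hw2 : ∀ i, w i ≤ ν (A i) := fun i => min_le_right _ _
  have hμt : ∀ i, μ (A i) ≠ ⊤ := fun i => measure_ne_top _ _
  have hνt : ∀ i, ν (A i) ≠ ⊤ := fun i => measure_ne_top _ _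
  have c1 : ∀ i, w i * (μ (A i))⁻¹ * (ν (A i))⁻¹ * ν (A i) = w i * (μ (A i))⁻¹ := by
    intro i
    by_cases h0 : ν (A i) = 0
    · have : w i = 0 := le_antisymm ((hw2 i).trans h0.le) bot_le
      simp [this]
    · rw [mul_assoc, ENNReal.inv_mul_cancel h0 (hνt i), mul_one]
  have c2 : ∀ i, w i * (μ (A i))⁻¹ * (ν (A i))⁻¹ * μ (A i) = w i * (ν (A i))⁻¹ := by
    intro i
    by_cases h0 : μ (A i) = 0
    · have : w i = 0 := le_antisymm ((hw1 i).trans h0.le) bot_le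
      simp [this]
    · rw [mul_right_comm, mul_assoc (w i), ENNReal.inv_mul_cancel h0 (hμt i), mul_one]
  have l1 : ∀ i, w i * (μ (A i))⁻¹ ≤ 1 := fun i =>
    (mul_le_mul_left (hw1 i) _).trans (ENNReal.mul_inv_le_one _)
  have l2 : ∀ i, w i * (ν (A i))⁻¹ ≤ 1 := fun i =>
    (mul_le_mul_left (hw2 i) _).trans (ENNReal.mul_inv_le_one _)
  have t1 : τ.map Prod.fst = ∑ i ∈ s, (w i * (μ (A i))⁻¹) • μ.restrict (A i) := by
    rw [hτ, ← Measure.mapₗ_apply_of_measurable measurable_fst, map_sum]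
    refine Finset.sum_congr rfl fun i _ => ?_
    rw [Measure.mapₗ_apply_of_measurable measurable_fst, Measure.map_smul, Measure.map_fst_prod,
      smul_smul, Measure.restrict_apply_univ, c1]
  have t2 : τ.map Prod.snd = ∑ i ∈ s, (w i * (ν (A i))⁻¹) • ν.restrict (A i) := by
    rw [hτ, ← Measure.mapₗ_apply_of_measurable measurable_snd, map_sum]
    refine Finset.sum_congr rfl fun i _ => ?_
    rw [Measure.mapₗ_apply_of_measurable measurable_snd, Measure.map_smul, Measure.map_snd_prod,
      smul_smul, Measure.restrict_apply_univ, c2]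
  have hsplit : ∀ (ρ : Measure Y) (a : ℕ → ℝ≥0∞), (∀ i, a i ≤ 1) →
      (∑ i ∈ s, a i • ρ.restrict (A i)) + ((∑ i ∈ s, (1 - a i) • ρ.restrict (A i)) +
        ρ.restrict (⋃ i ∈ s, A i)ᶜ) = ρ := by
    intro ρ a ha
    rw [← add_assoc, ← Finset.sum_add_distrib]
    conv_rhs => rw [← restrict_sum (μ := ρ) s A hA hd]
    congr 1
    refine Finset.sum_congr rfl fun i _ => ?_
    rw [← add_smul, add_tsub_cancel_of_le (ha i), one_smul]
  have hmom : ∀ (ρ : Measure Y) [IsProbabilityMeasure ρ], (∀ i, w i ≤ ρ (A i)) →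
      mom r y₀ ((∑ i ∈ s, (1 - w i * (ρ (A i))⁻¹) • ρ.restrict (A i)) +
        ρ.restrict (⋃ i ∈ s, A i)ᶜ) ≤ (∑ i ∈ s, (ρ (A i) - w i) * R) +
          mom r y₀ (ρ.restrict (⋃ i ∈ s, A i)ᶜ) := by
    intro ρ _ hw
    rw [mom, lintegral_add_measure, lintegral_finsetSum_measure]
    refine add_le_add (Finset.sum_le_sum fun i hi => ?_) le_rfl
    rw [lintegral_smul_measure]
    refine cell_term (measure_ne_top _ _) (hw i) ?_
    rw [← setLIntegral_const]
    exact setLIntegral_mono measurable_const fun y hy => hR i hi y hy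
  have hcost : ∫⁻ z, ENNReal.ofReal (dist z.1 z.2 ^ r) ∂τ ≤ ε := by
    have hae : ∀ᵐ z ∂τ, ENNReal.ofReal (dist z.1 z.2 ^ r) ≤ ε := by
      have hms : MeasurableSet {z : Y × Y | ¬ ENNReal.ofReal (dist z.1 z.2 ^ r) ≤ ε} :=
        (measurableSet_le (measurable_cost2 r) measurable_const).compl
      rw [ae_iff, hτ, Measure.finsetSum_apply]
      refine Finset.sum_eq_zero fun i _ => ?_
      rw [Measure.smul_apply, Measure.prod_restrict, Measure.restrict_apply hms]
      have : {z : Y × Y | ¬ ENNReal.ofReal (dist z.1 z.2 ^ r) ≤ ε} ∩ A i ×ˢ A i = ∅ := by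
        ext z
        simp only [mem_inter_iff, mem_ofPred_eq, mem_prod, mem_empty_iff_false, iff_false]
        rintro ⟨h, h1, h2⟩
        exact h (hε i _ h1 _ h2)
      rw [this]; simp
    calc _ ≤ ∫⁻ z, ε ∂τ := lintegral_mono_ae hae
      _ = ε * τ univ := lintegral_const _
      _ ≤ ε * 1 := by
        gcongr
        have : τ univ = (τ.map Prod.fst) univ := by
          rw [Measure.map_apply measurable_fst MeasurableSet.univ, preimage_univ]
        rw [this, t1]
        have h := congrArg (fun m => m univ) (hsplit μ _ l1)
        rw [Measure.add_apply] at h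
        exact le_of_le_of_eq le_self_add (h.trans measure_univ)
      _ = ε := mul_one _
  refine (coup_abs hr y₀ μ ν τ _ _ ((congrArg (· + _) t1).trans (hsplit μ _ l1))
    ((congrArg (· + _) t2).trans (hsplit ν _ l2))).trans ?_
  gcongr
  · exact hmom μ hw1
  · exact hmom ν hw2
end
end WOTaux

namespace WOTaux
open WOT

theorem lsc_lintegral_le {Ω : Type*} [MeasurableSpace Ω] [TopologicalSpace Ω]
    [OpensMeasurableSpace Ω] {μ : Measure Ω} {μs : ℕ → Measure Ω} {f : Ω → ℝ≥0∞}
    (hf : LowerSemicontinuous f)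
    (h_opens : ∀ G, IsOpen G → μ G ≤ atTop.liminf (fun i ↦ μs i G)) :
    ∫⁻ x, f x ∂μ ≤ atTop.liminf (fun i ↦ ∫⁻ x, f x ∂(μs i)) := by
  have hfm : Measurable f := hf.measurable
  have key : ∀ N : ℕ, ∫⁻ x, min (f x) N ∂μ ≤ atTop.liminf (fun i ↦ ∫⁻ x, f x ∂(μs i)) := by
    intro N
    set g : Ω → ℝ := fun x => (min (f x) N).toReal with hg
    have hne : ∀ x, min (f x) N ≠ ⊤ := fun x =>
      ((min_le_right _ _).trans_lt (ENNReal.natCast_lt_top N)).ne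
    have hgm : Measurable g := (hfm.min measurable_const).ennreal_toReal
    have hg0 : 0 ≤ g := fun x => ENNReal.toReal_nonneg
    have hgf : ∀ x, ENNReal.ofReal (g x) = min (f x) N := fun x => ENNReal.ofReal_toReal (hne x)
    have hopen : ∀ t : ℝ, 0 < t → IsOpen {a | t < g a} := by
      intro t ht
      have : {a | t < g a} = if ENNReal.ofReal t < N then f ⁻¹' Ioi (ENNReal.ofReal t) else ∅ := by
        ext a
        have h1 : t < g a ↔ ENNReal.ofReal t < min (f a) N := by
          rw [hg, ← ENNReal.ofReal_lt_iff_lt_toReal ht.le (hne a)]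
        split_ifs with h
        · simp only [mem_ofPred_eq, h1, lt_min_iff, h, and_true]; rfl
        · simp only [mem_ofPred_eq, h1, lt_min_iff, h, and_false]; rfl
      rw [this]
      split_ifs
      · exact hf.isOpen_preimage _
      · exact isOpen_empty
    have e : ∀ ρ : Measure Ω, ∫⁻ x, min (f x) N ∂ρ = ∫⁻ t in Ioi (0 : ℝ), ρ {a | t < g a} := by
      intro ρ
      rw [← lintegral_eq_lintegral_meas_lt _ (Eventually.of_forall hg0) hgm.aemeasurable]
      simp_rw [hgf]
    calc ∫⁻ x, min (f x) N ∂μ = ∫⁻ t in Ioi (0 : ℝ), μ {a | t < g a} := e μ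
      _ ≤ ∫⁻ t in Ioi (0 : ℝ), atTop.liminf (fun i ↦ (μs i) {a | t < g a}) :=
        setLIntegral_mono' measurableSet_Ioi fun t ht => h_opens _ (hopen t ht)
      _ ≤ atTop.liminf (fun i ↦ ∫⁻ t in Ioi (0 : ℝ), (μs i) {a | t < g a}) :=
        lintegral_liminf_le (fun n ↦ Antitone.measurable (fun s t hst ↦
            measure_mono (fun ω hω ↦ lt_of_le_of_lt hst hω)))
      _ ≤ _ := by
        refine liminf_le_liminf (Eventually.of_forall fun i => ?_)
        simp only [← e]
        exact lintegral_mono fun x => min_le_left _ _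
  have hsup : ∀ x, f x = ⨆ N : ℕ, min (f x) N := by
    intro x
    have : (⨆ N : ℕ, min (f x) (N : ℝ≥0∞)) = min (f x) (⨆ N : ℕ, (N : ℝ≥0∞)) :=
      (inf_iSup_eq (f x) (fun N : ℕ => (N : ℝ≥0∞))).symm
    rw [this, ENNReal.iSup_natCast, min_top_right]
  calc ∫⁻ x, f x ∂μ = ∫⁻ x, ⨆ N : ℕ, min (f x) N ∂μ := by simp_rw [← hsup]
    _ = ⨆ N : ℕ, ∫⁻ x, min (f x) N ∂μ :=
      lintegral_iSup (fun N => hfm.min measurable_const)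
        fun a b hab x => min_le_min le_rfl (by exact_mod_cast hab)
    _ ≤ _ := iSup_le key

theorem lsc_lintegral_PM {Ω : Type*} [MeasurableSpace Ω] [TopologicalSpace Ω]
    [OpensMeasurableSpace Ω] [HasOuterApproxClosed Ω] {μ : ProbabilityMeasure Ω}
    {μs : ℕ → ProbabilityMeasure Ω} (h : Tendsto μs atTop (𝓝 μ)) {f : Ω → ℝ≥0∞}
    (hf : LowerSemicontinuous f) :
    ∫⁻ x, f x ∂(μ : Measure Ω) ≤ atTop.liminf (fun i ↦ ∫⁻ x, f x ∂(μs i : Measure Ω)) :=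
  lsc_lintegral_le hf fun _ hG => ProbabilityMeasure.le_liminf_measure_open_of_tendsto h hG

section
variable {Y : Type*} [MeasurableSpace Y] [MetricSpace Y] [SecondCountableTopology Y] [BorelSpace Y]

theorem continuous_cost {r : ℝ} (hr : 1 ≤ r) (y₀ : Y) :
    Continuous fun y : Y => ENNReal.ofReal (dist y y₀ ^ r) :=
  ENNReal.continuous_ofReal.comp ((continuous_id.dist continuous_const).rpow_const
    fun _ => Or.inr (by linarith))

theorem mom_restrict_add (r : ℝ) (y₀ : Y) (μ : Measure Y) {B : Set Y} (hB : MeasurableSet B) :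
    mom r y₀ (μ.restrict B) + mom r y₀ (μ.restrict Bᶜ) = mom r y₀ μ :=
  lintegral_add_compl _ hB

theorem exists_cells (y₀ : Y) (p : Measure Y) [IsProbabilityMeasure p] {δ : ℝ} (hδ : 0 < δ) :
    ∃ (A : ℕ → Set Y) (c : ℕ → Y), (∀ i, MeasurableSet (A i)) ∧
      Pairwise (Function.onFun Disjoint A) ∧
      (∀ i, p (frontier (A i)) = 0) ∧ (∀ i, A i ⊆ Metric.ball (c i) (δ / 2)) ∧ (⋃ i, A i) = univ ∧
      ∀ N, IsOpen (⋃ i ∈ Finset.range (N + 1), A i) := by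
  haveI : Nonempty Y := ⟨y₀⟩
  have h1 : ∀ i : ℕ, ∃ ρ ∈ Ioo (δ / 4) (δ / 2),
      p (frontier (Metric.thickening ρ {TopologicalSpace.denseSeq Y i})) = 0 := fun i =>
    exists_null_frontier_thickening p _ (by linarith)
  choose ρ hρ hρ0 using h1
  set f : ℕ → Set Y := fun i => Metric.ball (TopologicalSpace.denseSeq Y i) (ρ i) with hf
  have hf0 : ∀ i, p (frontier (f i)) = 0 := fun i => by
    have := hρ0 i
    rwa [Metric.thickening_singleton] at this
  refine ⟨disjointed f, TopologicalSpace.denseSeq Y, ?_, disjoint_disjointed f, ?_, ?_, ?_, ?_⟩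
  · exact fun i => MeasurableSet.disjointed (fun i => measurableSet_ball) i
  · intro i
    refine disjointedRec (f := f) (p := fun s => p (frontier s) = 0) (fun t j ht => ?_) (hf0 i)
    have hsub : frontier (t \ f j) ⊆ frontier t ∪ frontier (f j) := by
      rw [diff_eq]
      refine (frontier_inter_subset _ _).trans ?_
      rw [frontier_compl]
      exact union_subset_union inter_subset_left inter_subset_right
    exact measure_mono_null hsub (measure_union_null ht (hf0 j))
  · intro i
    exact (disjointed_subset f i).trans (Metric.ball_subset_ball (hρ i).2.le)
  · rw [iUnion_disjointed]
    refine eq_univ_of_forall fun y => ?_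
    obtain ⟨i, hi⟩ := (TopologicalSpace.denseRange_denseSeq Y).exists_dist_lt y
      (show 0 < δ / 4 by linarith)
    exact mem_iUnion.2 ⟨i, Metric.mem_ball.2 (hi.trans (hρ i).1)⟩
  · intro N
    have : (⋃ i ∈ Finset.range (N + 1), disjointed f i) = ⋃ i ∈ Finset.range (N + 1), f i :=
      by
      rw [biUnion_range_succ_disjointed f N, partialSups_eq_biSup]
      ext y; simp [Nat.lt_succ_iff]
    rw [this]
    exact isOpen_biUnion fun i _ => Metric.isOpen_ball

theorem tail_small {r : ℝ} (y₀ : Y) (p : Measure Y) (hp : mom r y₀ p < ⊤) (A : ℕ → Set Y)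
    (hA : ∀ i, MeasurableSet (A i)) (hU : (⋃ i, A i) = univ) {ε : ℝ≥0∞} (hε : 0 < ε) :
    ∃ N, mom r y₀ (p.restrict (⋃ i ∈ Finset.range (N + 1), A i)ᶜ) ≤ ε := by
  set q := p.withDensity (fun y => ENNReal.ofReal (dist y y₀ ^ r)) with hq
  haveI : IsFiniteMeasure q := isFiniteMeasure_withDensity hp.ne
  have hm : ∀ N, MeasurableSet (⋃ i ∈ Finset.range (N + 1), A i)ᶜ := fun N =>
    (Finset.measurableSet_biUnion _ fun i _ => hA i).compl
  have ht : Tendsto (fun N => q (⋃ i ∈ Finset.range (N + 1), A i)ᶜ) atTop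
      (𝓝 (q (⋂ N, (⋃ i ∈ Finset.range (N + 1), A i)ᶜ))) := by
    refine tendsto_measure_iInter_atTop (fun N => (hm N).nullMeasurableSet) ?_ ⟨0, measure_ne_top _ _⟩
    intro a b hab
    refine compl_subset_compl.2 (biUnion_subset_biUnion_left ?_)
    intro i hi
    simp at hi ⊢; omega
  have he : (⋂ N, (⋃ i ∈ Finset.range (N + 1), A i)ᶜ) = ∅ := by
    rw [← compl_iUnion, compl_empty_iff, eq_univ_iff_forall]
    intro y
    obtain ⟨i, hi⟩ := mem_iUnion.1 (hU ▸ mem_univ y : y ∈ ⋃ i, A i)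
    exact mem_iUnion.2 ⟨i, mem_biUnion (by simp) hi⟩
  rw [he, measure_empty] at ht
  obtain ⟨N, hN⟩ := ((ENNReal.tendsto_nhds_zero.1 ht) ε hε).exists
  refine ⟨N, ?_⟩
  rwa [hq, withDensity_apply _ (hm N)] at hN

theorem WrTendsto_of_weak {r : ℝ} (hr : 1 ≤ r) (y₀ : Y) (p : ProbabilityMeasure Y)
    (ps : ℕ → ProbabilityMeasure Y) (hw : Tendsto ps atTop (𝓝 p))
    (hp : mom r y₀ (p : Measure Y) < ⊤)
    (hm : Tendsto (fun n => mom r y₀ (ps n : Measure Y)) atTop (𝓝 (mom r y₀ (p : Measure Y)))) :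
    WrTendsto r (fun n => (ps n : Measure Y)) p := by
  have hr0 : 0 < r := by linarith
  suffices h : Tendsto (fun n => Wr r (ps n : Measure Y) p ^ r) atTop (𝓝 0) by
    have h2 := (ENNReal.continuous_rpow_const (y := 1 / r)).continuousAt.tendsto.comp h
    rw [ENNReal.zero_rpow_of_pos (by positivity)] at h2
    refine h2.congr fun n => ?_
    simp only [Function.comp]
    rw [← ENNReal.rpow_mul, mul_one_div_cancel hr0.ne', ENNReal.rpow_one]
  rw [ENNReal.tendsto_nhds_zero]
  intro η hη
  set L : ℝ≥0∞ := 1 + 2 ^ r * 6 with hL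
  have hLt : L ≠ ⊤ := by
    have : (2 : ℝ≥0∞) ^ r ≠ ⊤ := ENNReal.rpow_ne_top_of_nonneg hr0.le (by simp)
    exact ENNReal.add_ne_top.2 ⟨by simp, ENNReal.mul_ne_top this (by simp)⟩
  obtain ⟨ε, hε0, hεη⟩ : ∃ ε : ℝ≥0, 0 < ε ∧ (ε : ℝ≥0∞) * L ≤ η := by
    have hpos : 0 < η / L := ENNReal.div_pos hη.ne' hLt
    obtain ⟨ε, h1, h2⟩ := ENNReal.lt_iff_exists_nnreal_btwn.1 hpos
    refine ⟨ε, by exact_mod_cast h1, ?_⟩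
    exact ENNReal.mul_le_of_le_div h2.le
  have hε : (0 : ℝ≥0∞) < ε := by exact_mod_cast hε0
  set δ : ℝ := (ε : ℝ) ^ (1 / r) with hδ
  have hδ0 : 0 < δ := Real.rpow_pos_of_pos (by exact_mod_cast hε0) _
  have hδr : δ ^ r = ε := by
    rw [hδ, ← Real.rpow_mul (NNReal.coe_nonneg ε), one_div_mul_cancel hr0.ne', Real.rpow_one]
  obtain ⟨A, c, hA, hd, hfr, hball, hU, hop⟩ := exists_cells y₀ (p : Measure Y) hδ0
  obtain ⟨N, hN⟩ := tail_small (r := r) y₀ (p : Measure Y) hp A hA hU hε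
  set s := Finset.range (N + 1) with hs
  set B := ⋃ i ∈ s, A i with hB
  have hBm : MeasurableSet B := (hop N).measurableSet
  set R : ℝ≥0∞ := ∑ i ∈ s, ENNReal.ofReal ((dist (c i) y₀ + δ) ^ r) with hRdef
  have hRt : R ≠ ⊤ := ENNReal.sum_ne_top.2 fun i _ => ENNReal.ofReal_ne_top
  have hεc : ∀ i, ∀ y ∈ A i, ∀ z ∈ A i, ENNReal.ofReal (dist y z ^ r) ≤ ε := by
    intro i y hy z hz
    have h1 := Metric.mem_ball.1 (hball i hy)
    have h2 := Metric.mem_ball.1 (hball i hz)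
    have h3 : dist y z ≤ δ := by
      have := dist_triangle_right y z (c i); linarith
    calc ENNReal.ofReal (dist y z ^ r) ≤ ENNReal.ofReal (δ ^ r) :=
          ENNReal.ofReal_le_ofReal (Real.rpow_le_rpow dist_nonneg h3 hr0.le)
      _ = ε := by rw [hδr, ENNReal.ofReal_coe_nnreal]
  have hRc : ∀ i ∈ s, ∀ y ∈ A i, ENNReal.ofReal (dist y y₀ ^ r) ≤ R := by
    intro i hi y hy
    have h1 := Metric.mem_ball.1 (hball i hy)
    have h3 : dist y y₀ ≤ dist (c i) y₀ + δ := by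
      have := dist_triangle y (c i) y₀; linarith
    refine (ENNReal.ofReal_le_ofReal (Real.rpow_le_rpow dist_nonneg h3 hr0.le)).trans ?_
    exact Finset.single_le_sum (f := fun i => ENNReal.ofReal ((dist (c i) y₀ + δ) ^ r))
      (fun i _ => bot_le) hi
  have hcell : ∀ i, Tendsto (fun n => (ps n : Measure Y) (A i)) atTop (𝓝 ((p : Measure Y) (A i))) :=
    fun i => ProbabilityMeasure.tendsto_measure_of_null_frontier_of_tendsto' hw (hfr i)
  have hmin : ∀ i, Tendsto (fun n => min ((ps n : Measure Y) (A i)) ((p : Measure Y) (A i))) atTop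
      (𝓝 ((p : Measure Y) (A i))) := fun i => by
    simpa using (hcell i).min (tendsto_const_nhds (x := (p : Measure Y) (A i)))
  have hz1 : Tendsto (fun n => ∑ i ∈ s, ((ps n : Measure Y) (A i) -
      min ((ps n : Measure Y) (A i)) ((p : Measure Y) (A i))) * R) atTop (𝓝 0) := by
    have : (0 : ℝ≥0∞) = ∑ i ∈ s, ((p : Measure Y) (A i) - (p : Measure Y) (A i)) * R := by simp
    rw [this]
    refine tendsto_finsetSum _ fun i _ => ENNReal.Tendsto.mul_const
      (ENNReal.Tendsto.sub (hcell i) (hmin i) (Or.inl (measure_ne_top _ _))) (Or.inr hRt)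
  have hz2 : Tendsto (fun n => ∑ i ∈ s, ((p : Measure Y) (A i) -
      min ((ps n : Measure Y) (A i)) ((p : Measure Y) (A i))) * R) atTop (𝓝 0) := by
    have : (0 : ℝ≥0∞) = ∑ i ∈ s, ((p : Measure Y) (A i) - (p : Measure Y) (A i)) * R := by simp
    rw [this]
    refine tendsto_finsetSum _ fun i _ => ENNReal.Tendsto.mul_const
      (ENNReal.Tendsto.sub tendsto_const_nhds (hmin i) (Or.inl (measure_ne_top _ _))) (Or.inr hRt)
  -- the mass of the moment inside B
  have hlsc : LowerSemicontinuous (B.indicator fun y => ENNReal.ofReal (dist y y₀ ^ r)) := by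
    intro y c hc
    by_cases hy : y ∈ B
    · rw [indicator_of_mem hy] at hc
      have h1 : ∀ᶠ z in 𝓝 y, z ∈ B := (hop N).mem_nhds hy
      have h2 := (continuous_cost hr y₀).continuousAt.eventually_const_lt hc
      filter_upwards [h1, h2] with z hz1 hz2
      rwa [indicator_of_mem hz1]
    · rw [indicator_of_notMem hy] at hc
      exact absurd hc not_lt_bot
  have hBlim : mom r y₀ ((p : Measure Y).restrict B) ≤
      atTop.liminf fun n => mom r y₀ ((ps n : Measure Y).restrict B) := by
    have := lsc_lintegral_PM hw hlsc
    simpa only [mom, lintegral_indicator hBm] using this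
  have hev1 : ∀ᶠ n in atTop, mom r y₀ ((p : Measure Y).restrict B) ≤
      mom r y₀ ((ps n : Measure Y).restrict B) + ε := by
    by_cases h0 : mom r y₀ ((p : Measure Y).restrict B) = 0
    · exact Eventually.of_forall fun n => by rw [h0]; exact bot_le
    · have hfin : mom r y₀ ((p : Measure Y).restrict B) ≠ ⊤ :=
        ((lintegral_mono' Measure.restrict_le_self le_rfl).trans_lt hp).ne
      have hlt := ENNReal.sub_lt_self hfin h0 hε.ne'
      filter_upwards [eventually_lt_of_lt_liminf (hlt.trans_le hBlim)] with n hn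
      exact tsub_le_iff_right.1 hn.le
  have hev2 : ∀ᶠ n in atTop, mom r y₀ (ps n : Measure Y) ≤ mom r y₀ (p : Measure Y) + ε :=
    (hm.eventually_lt_const (ENNReal.lt_add_right hp.ne hε.ne')).mono fun n h => h.le
  filter_upwards [ENNReal.tendsto_nhds_zero.1 hz1 ε hε, ENNReal.tendsto_nhds_zero.1 hz2 ε hε,
    hev1, hev2] with n h1 h2 h3 h4
  have h5 : mom r y₀ ((ps n : Measure Y).restrict Bᶜ) ≤ 3 * ε := by
    have hfin : mom r y₀ ((ps n : Measure Y).restrict B) ≠ ⊤ :=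
      ((lintegral_mono' Measure.restrict_le_self le_rfl).trans_lt
        (h4.trans_lt (ENNReal.add_lt_top.2 ⟨hp, ENNReal.coe_lt_top⟩))).ne
    refine (ENNReal.add_le_add_iff_left hfin).1 ?_
    rw [mom_restrict_add r y₀ _ hBm]
    refine h4.trans ?_
    rw [← mom_restrict_add r y₀ (p : Measure Y) hBm]
    calc _ ≤ (mom r y₀ ((ps n : Measure Y).restrict B) + ε) + ε + ε := by gcongr
      _ = _ := by ring
  refine (cell_bound hr y₀ (ps n : Measure Y) (p : Measure Y) s A hA hd ε R hεc hRc).trans ?_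
  calc _ ≤ (ε : ℝ≥0∞) + 2 ^ r * ((ε + 3 * ε) + (ε + ε)) := by gcongr
    _ = ε * L := by rw [hL]; ring
    _ ≤ η := hεη
end
end WOTaux

namespace WOTaux
open WOT

section
variable {Y : Type*} [MeasurableSpace Y] [MetricSpace Y] [SecondCountableTopology Y] [BorelSpace Y]

theorem cost_rpow {r : ℝ} (hr : 1 ≤ r) (y z : Y) :
    ENNReal.ofReal (dist y z ^ r) = ENNReal.ofReal (dist y z) ^ r :=
  (ENNReal.ofReal_rpow_of_nonneg dist_nonneg (by linarith)).symm

theorem mom_triangle {r : ℝ} (hr : 1 ≤ r) (y₀ : Y) (p q : Measure Y) :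
    mom r y₀ p ^ (1 / r) ≤ Wr r p q + mom r y₀ q ^ (1 / r) ∧
    mom r y₀ q ^ (1 / r) ≤ Wr r p q + mom r y₀ p ^ (1 / r) := by
  have hr0 : 0 < r := by linarith
  have md : Measurable fun z : Y × Y => ENNReal.ofReal (dist z.1 z.2) :=
    ENNReal.measurable_ofReal.comp (measurable_fst.dist measurable_snd)
  have m1 : Measurable fun z : Y × Y => ENNReal.ofReal (dist z.1 y₀) :=
    ENNReal.measurable_ofReal.comp (measurable_fst.dist measurable_const)
  have m2 : Measurable fun z : Y × Y => ENNReal.ofReal (dist z.2 y₀) :=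
    ENNReal.measurable_ofReal.comp (measurable_snd.dist measurable_const)
  have key : ∀ π ∈ Couplings p q,
      mom r y₀ p ^ (1 / r) ≤ (∫⁻ z : Y × Y, ENNReal.ofReal (dist z.1 z.2 ^ r) ∂π) ^ (1 / r)
        + mom r y₀ q ^ (1 / r) ∧
      mom r y₀ q ^ (1 / r) ≤ (∫⁻ z : Y × Y, ENNReal.ofReal (dist z.1 z.2 ^ r) ∂π) ^ (1 / r)
        + mom r y₀ p ^ (1 / r) := by
    rintro π ⟨h1, h2⟩
    have e1 : mom r y₀ p = ∫⁻ z : Y × Y, ENNReal.ofReal (dist z.1 y₀) ^ r ∂π := by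
      rw [← h1, mom, lintegral_map (measurable_cost r y₀) measurable_fst]
      simp_rw [cost_rpow hr]
    have e2 : mom r y₀ q = ∫⁻ z : Y × Y, ENNReal.ofReal (dist z.2 y₀) ^ r ∂π := by
      rw [← h2, mom, lintegral_map (measurable_cost r y₀) measurable_snd]
      simp_rw [cost_rpow hr]
    rw [e1, e2]
    simp_rw [cost_rpow hr]
    constructor
    · refine le_trans ?_ (ENNReal.lintegral_Lp_add_le md.aemeasurable m2.aemeasurable hr)
      refine ENNReal.rpow_le_rpow (lintegral_mono fun z => ENNReal.rpow_le_rpow ?_ hr0.le)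
        (by positivity)
      simp only [Pi.add_apply]
      rw [← ENNReal.ofReal_add dist_nonneg dist_nonneg]
      exact ENNReal.ofReal_le_ofReal (dist_triangle _ _ _)
    · refine le_trans ?_ (ENNReal.lintegral_Lp_add_le md.aemeasurable m1.aemeasurable hr)
      refine ENNReal.rpow_le_rpow (lintegral_mono fun z => ENNReal.rpow_le_rpow ?_ hr0.le)
        (by positivity)
      simp only [Pi.add_apply]
      rw [← ENNReal.ofReal_add dist_nonneg dist_nonneg]
      exact ENNReal.ofReal_le_ofReal (dist_triangle_left _ _ _)
  unfold Wr
  constructor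
  · simp only [ENNReal.iInf_add]
    exact le_iInf fun π => le_iInf fun h => (key π h).1
  · simp only [ENNReal.iInf_add]
    exact le_iInf fun π => le_iInf fun h => (key π h).2

theorem mom_tendsto {r : ℝ} (hr : 1 ≤ r) (y₀ : Y) {p : Measure Y} {ps : ℕ → Measure Y}
    (h : WrTendsto r ps p) : Tendsto (fun n => mom r y₀ (ps n)) atTop (𝓝 (mom r y₀ p)) := by
  have hr0 : 0 < r := by linarith
  have h' : Tendsto (fun n => Wr r (ps n) p) atTop (𝓝 0) := h
  have h1 : Tendsto (fun n => mom r y₀ (ps n) ^ (1 / r)) atTop (𝓝 (mom r y₀ p ^ (1 / r))) := by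
    by_cases htop : mom r y₀ p ^ (1 / r) = ⊤
    · refine tendsto_const_nhds.congr' ?_
      filter_upwards [h'.eventually_lt_const ENNReal.zero_lt_top] with n hn
      have := (mom_triangle hr y₀ (ps n) p).2
      rw [htop, top_le_iff, ENNReal.add_eq_top] at this
      rw [htop]
      exact (this.resolve_left hn.ne).symm
    · have hlow : Tendsto (fun n => mom r y₀ p ^ (1 / r) - Wr r (ps n) p) atTop
          (𝓝 (mom r y₀ p ^ (1 / r))) := by
        simpa using ENNReal.Tendsto.sub (tendsto_const_nhds (x := mom r y₀ p ^ (1 / r))) h'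
          (Or.inl htop)
      have hup : Tendsto (fun n => Wr r (ps n) p + mom r y₀ p ^ (1 / r)) atTop
          (𝓝 (mom r y₀ p ^ (1 / r))) := by
        simpa using h'.add (tendsto_const_nhds (x := mom r y₀ p ^ (1 / r)))
      refine tendsto_of_tendsto_of_tendsto_of_le_of_le hlow hup (fun n => ?_) fun n => ?_
      · exact tsub_le_iff_left.2 (mom_triangle hr y₀ (ps n) p).2
      · exact (mom_triangle hr y₀ (ps n) p).1
  have h2 := (ENNReal.continuous_rpow_const (y := r)).continuousAt.tendsto.comp h1
  simpa only [Function.comp_def, ← ENNReal.rpow_mul, one_div_mul_cancel hr0.ne', ENNReal.rpow_one]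
    using h2

theorem lip_bound {r : ℝ} (hr : 1 ≤ r) (p q : Measure Y) [IsProbabilityMeasure p]
    [IsProbabilityMeasure q] {f : Y → ℝ} {B : ℝ} (hB : ∀ x y, dist (f x) (f y) ≤ B)
    {L : ℝ≥0} (hL : LipschitzWith L f) :
    edist (∫ y, f y ∂p) (∫ y, f y ∂q) ≤ L * Wr r p q := by
  have hr0 : 0 < r := by linarith
  have hcoup : ∀ π ∈ Couplings p q, edist (∫ y, f y ∂p) (∫ y, f y ∂q) ≤
      L * (∫⁻ z : Y × Y, ENNReal.ofReal (dist z.1 z.2 ^ r) ∂π) ^ (1 / r) := by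
    rintro π ⟨h1, h2⟩
    haveI : IsProbabilityMeasure π := ⟨by
      have := measure_univ (μ := p)
      rwa [← h1, Measure.map_apply measurable_fst MeasurableSet.univ] at this⟩
    have hfm : Measurable f := hL.continuous.measurable
    obtain ⟨y⟩ : Nonempty Y := by
      by_contra hn
      haveI := not_nonempty_iff.1 hn
      have := measure_univ (μ := p)
      rw [univ_eq_empty_iff.2 inferInstance, measure_empty] at this
      exact zero_ne_one this
    have hbd : ∀ z, ‖f z‖ ≤ B + ‖f y‖ := fun z => by
      have h1 := hB z y
      rw [dist_eq_norm] at h1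
      have := norm_add_le (f z - f y) (f y)
      simp only [sub_add_cancel] at this
      linarith
    have i1 : Integrable (fun z : Y × Y => f z.1) π :=
      (integrable_const (B + ‖f y‖)).mono' (hfm.comp measurable_fst).aestronglyMeasurable
        (Eventually.of_forall fun z => hbd _)
    have i2 : Integrable (fun z : Y × Y => f z.2) π :=
      (integrable_const (B + ‖f y‖)).mono' (hfm.comp measurable_snd).aestronglyMeasurable
        (Eventually.of_forall fun z => hbd _)
    rw [← h1, ← h2, integral_map measurable_fst.aemeasurable hfm.aestronglyMeasurable,
      integral_map measurable_snd.aemeasurable hfm.aestronglyMeasurable, edist_eq_enorm_sub,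
      ← integral_sub i1 i2]
    refine (enorm_integral_le_lintegral_enorm _).trans ?_
    have e3 : ∫⁻ z : Y × Y, ENNReal.ofReal (dist z.1 z.2) ∂π ≤
        (∫⁻ z : Y × Y, ENNReal.ofReal (dist z.1 z.2 ^ r) ∂π) ^ (1 / r) := by
      have := eLpNorm'_le_eLpNorm'_of_exponent_le (f := fun z : Y × Y => dist z.1 z.2)
        zero_lt_one hr π (measurable_fst.dist measurable_snd).aestronglyMeasurable
      simp only [eLpNorm', ENNReal.rpow_one, div_one] at this
      simp only [Real.enorm_eq_ofReal dist_nonneg] at this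
      simpa only [cost_rpow hr] using this
    calc ∫⁻ z : Y × Y, ‖f z.1 - f z.2‖ₑ ∂π ≤ ∫⁻ z : Y × Y, L * ENNReal.ofReal (dist z.1 z.2) ∂π := by
          refine lintegral_mono fun z => ?_
          have := hL z.1 z.2
          rwa [edist_eq_enorm_sub, edist_dist] at this
      _ = L * ∫⁻ z : Y × Y, ENNReal.ofReal (dist z.1 z.2) ∂π :=
        lintegral_const_mul _ (ENNReal.measurable_ofReal.comp (measurable_fst.dist measurable_snd))
      _ ≤ _ := by gcongr
  unfold Wr
  haveI : Nonempty (Couplings p q) := ⟨⟨p.prod q, by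
    constructor
    · rw [← Measure.fst, Measure.fst_prod]
    · rw [← Measure.snd, Measure.snd_prod]⟩⟩
  rw [iInf_subtype', ENNReal.mul_iInf (by simp)]
  exact le_iInf fun π => hcoup π.1 π.2

theorem weak_of_WrTendsto {r : ℝ} (hr : 1 ≤ r) (p : ProbabilityMeasure Y)
    (ps : ℕ → ProbabilityMeasure Y) (h : WrTendsto r (fun n => (ps n : Measure Y)) p) :
    Tendsto ps atTop (𝓝 p) := by
  rw [tendsto_iff_forall_lipschitz_integral_tendsto]
  rintro f ⟨B, hB⟩ ⟨L, hL⟩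
  rw [tendsto_iff_edist_tendsto_0]
  have h' : Tendsto (fun n => (L : ℝ≥0∞) * Wr r (ps n : Measure Y) p) atTop (𝓝 0) := by
    have := ENNReal.Tendsto.const_mul (a := (L : ℝ≥0∞)) h (Or.inr ENNReal.coe_ne_top)
    simpa using this
  exact tendsto_of_tendsto_of_tendsto_of_le_of_le tendsto_const_nhds h' (fun n => bot_le)
    fun n => lip_bound hr _ _ hB hL

end
end WOTaux

namespace WOTaux
open WOT

/-- The reduced relaxed cost. -/
def Dt {Y : Type*} [MeasurableSpace Y] (D : Measure Y → ℝ≥0∞) (p : Measure Y) : ℝ≥0∞ :=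
  ⨅ Q : ProbabilityMeasure (ProbabilityMeasure Y), ⨅ _ : (joinP Q : Measure Y) = p,
    ∫⁻ q, D (q : Measure Y) ∂(Q : Measure (ProbabilityMeasure Y))

theorem Dt_selection {Y : Type*} [MeasurableSpace Y] [StandardBorelSpace Y] [Nonempty Y]
    (D : Measure Y → ℝ≥0∞) (hD : Measurable D) (Q : ProbabilityMeasure (ProbabilityMeasure Y)) :
    AEMeasurable (fun q : ProbabilityMeasure Y => Dt D (q : Measure Y))
      (Q : Measure (ProbabilityMeasure Y)) ∧
    Dt D (joinP Q : Measure Y) ≤ ∫⁻ q, Dt D (q : Measure Y) ∂(Q : Measure (ProbabilityMeasure Y)) := by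
  haveI := standardBorel_PM Y
  haveI := standardBorel_PM (ProbabilityMeasure Y)
  haveI : Nonempty (ProbabilityMeasure (ProbabilityMeasure Y)) := ⟨Q⟩
  classical
  have hDc : Measurable fun q : ProbabilityMeasure Y => D (q : Measure Y) :=
    hD.comp measurable_PM_coe
  set F : ProbabilityMeasure Y × ProbabilityMeasure (ProbabilityMeasure Y) → ℝ≥0∞ := fun sz =>
    if joinP sz.2 = sz.1 then ∫⁻ q, D (q : Measure Y) ∂(sz.2 : Measure (ProbabilityMeasure Y)) else ⊤
    with hF
  have hFm : Measurable F := by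
    refine Measurable.ite ?_ ?_ measurable_const
    · exact measurableSet_eq_fun (measurable_joinP.comp measurable_snd) measurable_fst
    · exact (Measure.measurable_lintegral hDc).comp (measurable_PM_coe.comp measurable_snd)
  have hDt : ∀ s : ProbabilityMeasure Y, ⨅ z, F (s, z) = Dt D (s : Measure Y) := by
    intro s
    refine iInf_congr fun z => ?_
    by_cases h : joinP z = s
    · have h' : (joinP z : Measure Y) = s := by rw [h]
      simp [hF, h]
    · have h' : (joinP z : Measure Y) ≠ s := fun hh => h (Subtype.ext hh)
      simp [hF, h, h']
  obtain ⟨hae, hsel⟩ := selection_inf (Q : Measure (ProbabilityMeasure Y)) F hFm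
  simp only [hDt] at hae hsel
  refine ⟨hae, ?_⟩
  by_cases htop : ∫⁻ q, Dt D (q : Measure Y) ∂(Q : Measure (ProbabilityMeasure Y)) = ⊤
  · rw [htop]; exact le_top
  refine ENNReal.le_of_forall_pos_le_add fun ε hε _ => ?_
  obtain ⟨σ, hσ, hσ2⟩ := hsel ε (by exact_mod_cast hε)
  have hlt := ae_lt_top' hae htop
  have hgood : ∀ᵐ s ∂(Q : Measure (ProbabilityMeasure Y)), joinP (σ s) = s ∧
      ∫⁻ q, D (q : Measure Y) ∂(σ s : Measure (ProbabilityMeasure Y)) ≤ Dt D (s : Measure Y) + ε := by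
    filter_upwards [hσ2, hlt] with s h1 h2
    have h3 : F (s, σ s) < ⊤ := h1.trans_lt (ENNReal.add_lt_top.2 ⟨h2, ENNReal.coe_lt_top⟩)
    by_cases h : joinP (σ s) = s
    · simp only [hF, h, if_true] at h1
      exact ⟨h, h1⟩
    · simp [hF, h] at h3
  set R : ProbabilityMeasure (ProbabilityMeasure (ProbabilityMeasure Y)) := Q.map hσ.aemeasurable
    with hR
  have hRl : ∀ {f : ProbabilityMeasure (ProbabilityMeasure Y) → ℝ≥0∞}, Measurable f →
      ∫⁻ z, f z ∂(R : Measure (ProbabilityMeasure (ProbabilityMeasure Y))) =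
        ∫⁻ s, f (σ s) ∂(Q : Measure (ProbabilityMeasure Y)) := by
    intro f hf
    rw [hR, ProbabilityMeasure.toMeasure_map, lintegral_map hf hσ]
  have hj : (joinP (joinP R) : Measure Y) = joinP Q := by
    ext B hB
    have hfB : Measurable (B.indicator (1 : Y → ℝ≥0∞)) := measurable_one.indicator hB
    have hmB : Measurable fun p : ProbabilityMeasure Y => ∫⁻ y, B.indicator (1 : Y → ℝ≥0∞) y ∂(p : Measure Y) :=
      (Measure.measurable_lintegral hfB).comp measurable_PM_coe
    have hmB2 : Measurable fun z : ProbabilityMeasure (ProbabilityMeasure Y) =>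
        ∫⁻ p : ProbabilityMeasure Y, ∫⁻ y, B.indicator (1 : Y → ℝ≥0∞) y ∂(p : Measure Y) ∂(z : Measure (ProbabilityMeasure Y)) :=
      (Measure.measurable_lintegral hmB).comp measurable_PM_coe
    rw [← lintegral_indicator_one hB, ← lintegral_indicator_one hB, lintegral_joinP _ hfB,
      lintegral_joinP _ hmB, lintegral_joinP _ hfB, hRl hmB2]
    refine lintegral_congr_ae (hgood.mono fun s hs => ?_)
    simp only
    rw [← lintegral_joinP _ hfB, hs.1]
  calc Dt D (joinP Q : Measure Y)
      ≤ ∫⁻ q, D (q : Measure Y) ∂(joinP R : Measure (ProbabilityMeasure Y)) :=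
        (iInf_le _ (joinP R)).trans (iInf_le _ hj)
    _ = ∫⁻ s, ∫⁻ q, D (q : Measure Y) ∂(σ s : Measure (ProbabilityMeasure Y))
          ∂(Q : Measure (ProbabilityMeasure Y)) := by
        rw [lintegral_joinP _ hDc]
        exact hRl ((Measure.measurable_lintegral hDc).comp measurable_PM_coe)
    _ ≤ ∫⁻ s : ProbabilityMeasure Y, (Dt D (s : Measure Y) + ε) ∂(Q : Measure (ProbabilityMeasure Y)) :=
        lintegral_mono_ae (hgood.mono fun s hs => hs.2)
    _ = _ := by
        rw [lintegral_add_right _ measurable_const]; simp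

/-- integral of a difference -/
theorem eInt_eq {Ω : Type*} [MeasurableSpace Ω] {ν : Measure Ω} {f : Ω → EReal} {D : Ω → ℝ≥0∞}
    {g : Ω → ℝ} (hD : AEMeasurable D ν) (hg : Measurable g) (hg0 : ∀ x, 0 ≤ g x)
    (hgi : ∫⁻ x, ENNReal.ofReal (g x) ∂ν ≠ ⊤)
    (hf : ∀ᵐ x ∂ν, f x = (D x : EReal) - (g x : EReal)) :
    eInt f ν = ((∫⁻ x, D x ∂ν : ℝ≥0∞) : EReal) - ((∫⁻ x, ENNReal.ofReal (g x) ∂ν : ℝ≥0∞) : EReal) := by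
  have e1 : ∀ᵐ x ∂ν, epos (f x) = D x - ENNReal.ofReal (g x) ∧
      epos (-(f x)) = ENNReal.ofReal (g x) - D x := by
    filter_upwards [hf] with x hx
    rw [hx]
    generalize hd : D x = d
    generalize hgx : g x = c
    have hc : 0 ≤ c := hgx ▸ hg0 x
    induction d using ENNReal.recTopCoe with
    | top => simp [epos]
    | coe d =>
      have h1 : ((d : ℝ≥0∞) : EReal) - (c : EReal) = (((d : ℝ) - c : ℝ) : EReal) := by
        rw [EReal.coe_sub]; rfl
      rw [h1, ← EReal.coe_neg]
      simp only [epos, EReal.coe_ne_top, if_false, EReal.toReal_coe]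
      rw [neg_sub, ENNReal.ofReal_sub _ hc, ENNReal.ofReal_sub _ (NNReal.coe_nonneg d), ENNReal.ofReal_coe_nnreal]
      simp
  have i1 : ∫⁻ x, epos (f x) ∂ν = ∫⁻ x, (D x - ENNReal.ofReal (g x)) ∂ν :=
    lintegral_congr_ae (e1.mono fun x hx => hx.1)
  have i2 : ∫⁻ x, epos (-(f x)) ∂ν = ∫⁻ x, (ENNReal.ofReal (g x) - D x) ∂ν :=
    lintegral_congr_ae (e1.mono fun x hx => hx.2)
  have hgm : Measurable fun x => ENNReal.ofReal (g x) := hg.ennreal_ofReal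
  have hsum : ∫⁻ x, (D x - ENNReal.ofReal (g x)) ∂ν + ∫⁻ x, ENNReal.ofReal (g x) ∂ν =
      ∫⁻ x, (ENNReal.ofReal (g x) - D x) ∂ν + ∫⁻ x, D x ∂ν := by
    rw [← lintegral_add_right _ hgm, ← lintegral_add_right' _ hD]
    refine lintegral_congr fun x => ?_
    rw [tsub_add_eq_max, tsub_add_eq_max, max_comm]
  have hB : ∫⁻ x, (ENNReal.ofReal (g x) - D x) ∂ν ≠ ⊤ :=
    ((lintegral_mono fun x => tsub_le_self).trans_lt hgi.lt_top).ne
  rw [eInt, i1, i2]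
  generalize (∫⁻ x, (D x - ENNReal.ofReal (g x)) ∂ν) = A at *
  generalize (∫⁻ x, (ENNReal.ofReal (g x) - D x) ∂ν) = B at *
  generalize (∫⁻ x, ENNReal.ofReal (g x) ∂ν) = G at *
  generalize (∫⁻ x, D x ∂ν) = E at *
  lift B to ℝ≥0 using hB
  lift G to ℝ≥0 using hgi
  have hBc : ((B : ℝ≥0∞) : EReal) = ((B : ℝ) : EReal) := rfl
  have hGc : ((G : ℝ≥0∞) : EReal) = ((G : ℝ) : EReal) := rfl
  induction A using ENNReal.recTopCoe with
  | top =>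
    have : E = ⊤ := by
      rw [top_add] at hsum
      rcases ENNReal.add_eq_top.1 hsum.symm with h | h
      · simp at h
      · exact h
    rw [this, hBc, hGc]; simp
  | coe A =>
    induction E using ENNReal.recTopCoe with
    | top => rw [add_top] at hsum; exact absurd hsum (by simp)
    | coe E =>
      have h : (A : ℝ) + G = B + E := by exact_mod_cast hsum
      have hA : ((A : ℝ≥0∞) : EReal) = ((A : ℝ) : EReal) := rfl
      have hE : ((E : ℝ≥0∞) : EReal) = ((E : ℝ) : EReal) := rfl
      rw [hA, hE, hBc, hGc, ← EReal.coe_sub, ← EReal.coe_sub]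
      congr 1; linarith

theorem measurable_epos : Measurable epos := by
  unfold epos
  exact Measurable.ite (measurableSet_singleton ⊤) measurable_const
    (ENNReal.measurable_ofReal.comp measurable_ereal_toReal)

theorem embPM (T : Type*) [MeasurableSpace T] :
    MeasurableEmbedding (ProbabilityMeasure.toMeasure (Ω := T)) :=
  MeasurableEmbedding.subtype_coe measurableSet_isPM

end WOTaux

namespace WOTaux
open WOT

theorem le_coe_toENNReal (x : EReal) : x ≤ (x.toENNReal : EReal) := by
  rcases le_total 0 x with h | h
  · rw [EReal.coe_toENNReal h]
  · exact h.trans (EReal.coe_ennreal_nonneg _)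

section
variable {Y : Type*} [MeasurableSpace Y] [MetricSpace Y] [SecondCountableTopology Y] [BorelSpace Y]

/-- The affine minorant. -/
def gg (r : ℝ) (y₀ : Y) (a k : ℝ) (p : Measure Y) : ℝ := a + k * (mom r y₀ p).toReal

/-- The nonnegative reduced cost. -/
def DD (r : ℝ) (y₀ : Y) (a k : ℝ) (f : Measure Y → EReal) (p : Measure Y) : ℝ≥0∞ :=
  epos (f p + (gg r y₀ a k p : EReal))

theorem measurable_gg (r : ℝ) (y₀ : Y) (a k : ℝ) : Measurable (gg (Y := Y) r y₀ a k) :=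
  ((measurable_mom r y₀).ennreal_toReal.const_mul k).const_add a

theorem measurable_DD (r : ℝ) (y₀ : Y) (a k : ℝ) {f : Measure Y → EReal} (hf : Measurable f) :
    Measurable (DD r y₀ a k f) :=
  measurable_epos.comp (hf.add (measurable_gg r y₀ a k).coe_real_ereal)

theorem gg_nonneg (r : ℝ) (y₀ : Y) {a k : ℝ} (ha : 0 ≤ a) (hk : 0 ≤ k) (p : Measure Y) :
    0 ≤ gg r y₀ a k p := add_nonneg ha (mul_nonneg hk ENNReal.toReal_nonneg)

theorem f_eq {r : ℝ} {y₀ : Y} {a k : ℝ} {f : Measure Y → EReal} {p : Measure Y}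
    (h : ((-(gg r y₀ a k p) : ℝ) : EReal) ≤ f p) :
    f p = (DD r y₀ a k f p : EReal) - (gg r y₀ a k p : EReal) := by
  unfold DD
  generalize gg r y₀ a k p = c at *
  generalize f p = e at *
  induction e with
  | bot => simp at h
  | top => simp [epos]
  | coe e =>
    have h1 : -c ≤ e := by exact_mod_cast h
    rw [← EReal.coe_add]
    simp only [epos, EReal.coe_ne_top, if_false, EReal.toReal_coe]
    rw [EReal.coe_ennreal_ofReal, max_eq_left (by linarith), ← EReal.coe_sub]
    simp

theorem lintegral_gg {r : ℝ} {y₀ : Y} {a k : ℝ} (ha : 0 ≤ a) (hk : 0 ≤ k)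
    {Q : Measure (Measure Y)} [IsProbabilityMeasure Q] (hQ : Q.join ∈ Pr r y₀) :
    ∫⁻ q, ENNReal.ofReal (gg r y₀ a k q) ∂Q = ENNReal.ofReal (gg r y₀ a k Q.join) := by
  have hfin : ∫⁻ q, mom r y₀ q ∂Q ≠ ⊤ := by rw [lintegral_mom_eq]; exact hQ.2.ne
  have h1 : ∀ᵐ q ∂Q, ENNReal.ofReal (gg r y₀ a k q) = ENNReal.ofReal a + ENNReal.ofReal k * mom r y₀ q := by
    filter_upwards [ae_lt_top (measurable_mom r y₀) hfin] with q hq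
    rw [gg, ENNReal.ofReal_add ha (mul_nonneg hk ENNReal.toReal_nonneg), ENNReal.ofReal_mul hk,
      ENNReal.ofReal_toReal hq.ne]
  rw [lintegral_congr_ae h1, lintegral_add_left measurable_const, lintegral_const_mul _ (measurable_mom r y₀),
    lintegral_mom_eq, gg, ENNReal.ofReal_add ha (mul_nonneg hk ENNReal.toReal_nonneg),
    ENNReal.ofReal_mul hk, ENNReal.ofReal_toReal (show mom r y₀ Q.join ≠ ⊤ from hQ.2.ne)]
  simp

theorem eInt_red {r : ℝ} {y₀ : Y} {a k : ℝ} (ha : 0 ≤ a) (hk : 0 ≤ k)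
    {Q : Measure (Measure Y)} (hQ : Q ∈ PrP r y₀) (hj : Q.join ∈ Pr r y₀)
    {h : Measure Y → EReal} {D : Measure Y → ℝ≥0∞} (hD : AEMeasurable D Q)
    (hh : ∀ q ∈ Pr r y₀, h q = (D q : EReal) - (gg r y₀ a k q : EReal)) :
    eInt h Q = ((∫⁻ q, D q ∂Q : ℝ≥0∞) : EReal) - (gg r y₀ a k Q.join : EReal) := by
  haveI := hQ.1
  have e := lintegral_gg (r := r) (y₀ := y₀) ha hk hj
  rw [eInt_eq hD (measurable_gg r y₀ a k) (gg_nonneg r y₀ ha hk) (by rw [e]; simp)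
    (hQ.2.1.mono fun q hq => hh q hq), e, EReal.coe_ennreal_ofReal, max_eq_left
    (gg_nonneg r y₀ ha hk _)]

theorem tilde_red {r : ℝ} (hr : 1 ≤ r) {y₀ : Y} {a k : ℝ} (ha : 0 ≤ a) (hk : 0 ≤ k)
    {f : Measure Y → EReal} (hf : Measurable f)
    (hlb : ∀ p ∈ Pr r y₀, ((-(gg r y₀ a k p) : ℝ) : EReal) ≤ f p) {p : Measure Y}
    (hp : p ∈ Pr r y₀) :
    (⨅ Q ∈ {Q | Q ∈ PrP r y₀ ∧ intensity Q = p}, eInt f Q) =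
      (Dt (DD r y₀ a k f) p : EReal) - (gg r y₀ a k p : EReal) := by
  have hDm := measurable_DD r y₀ a k hf
  have hfe : ∀ q ∈ Pr r y₀, f q = (DD r y₀ a k f q : EReal) - (gg r y₀ a k q : EReal) :=
    fun q hq => f_eq (hlb q hq)
  apply le_antisymm
  · set t := (⨅ Q ∈ {Q | Q ∈ PrP r y₀ ∧ intensity Q = p}, eInt f Q) with ht
    rw [EReal.le_sub_iff_add_le (by simp) (by simp)]
    refine (le_coe_toENNReal _).trans ?_
    rw [EReal.coe_ennreal_le_coe_ennreal_iff]
    refine le_iInf fun Q => le_iInf fun hQ => ?_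
    set Q' := (Q : Measure (ProbabilityMeasure Y)).map ProbabilityMeasure.toMeasure with hQ'
    haveI : IsProbabilityMeasure Q' := Measure.isProbabilityMeasure_map measurable_PM_coe.aemeasurable
    have hjQ : Q'.join = p := hQ
    have hmem : Q' ∈ PrP r y₀ := by
      refine mem_PrP hr inferInstance ?_ (hjQ ▸ hp)
      rw [hQ', ae_map_iff measurable_PM_coe.aemeasurable measurableSet_isPM]
      exact Eventually.of_forall fun q => inferInstance
    have h1 : t ≤ eInt f Q' := iInf₂_le Q' ⟨hmem, hjQ⟩
    rw [eInt_red ha hk hmem (hjQ ▸ hp) hDm.aemeasurable hfe, hjQ,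
      EReal.le_sub_iff_add_le (by simp) (by simp), hQ',
      lintegral_map hDm measurable_PM_coe] at h1
    have h2 := EReal.toENNReal_le_toENNReal h1
    rwa [EReal.toENNReal_coe] at h2
  · refine le_iInf₂ fun Q hQ => ?_
    haveI := hQ.1.1
    have hjQ : Q.join = p := hQ.2
    rw [eInt_red ha hk hQ.1 (hjQ ▸ hp) hDm.aemeasurable hfe, hjQ]
    refine EReal.sub_le_sub ?_ le_rfl
    rw [EReal.coe_ennreal_le_coe_ennreal_iff]
    obtain ⟨Q', hQ'⟩ := exists_lift Q (hQ.1.2.1.mono fun q hq => hq.1)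
    refine (iInf_le _ Q').trans ((iInf_le _ ?_).trans ?_)
    · rw [joinP_coe, hQ', hjQ]
    · rw [← hQ', lintegral_map hDm measurable_PM_coe]

theorem second_ineq {r : ℝ} (hr : 1 ≤ r) [StandardBorelSpace Y] {y₀ : Y} {a k : ℝ} (ha : 0 ≤ a) (hk : 0 ≤ k)
    {f : Measure Y → EReal} (hf : Measurable f)
    {h : Measure Y → EReal}
    (hh : ∀ p ∈ Pr r y₀, h p = (Dt (DD r y₀ a k f) p : EReal) - (gg r y₀ a k p : EReal))
    {p : Measure Y} (hp : p ∈ Pr r y₀) {Q : Measure (Measure Y)} (hQ : Q ∈ PrP r y₀)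
    (hjQ : Q.join = p) : h p ≤ eInt h Q := by
  haveI : Nonempty Y := ⟨y₀⟩
  haveI := hQ.1
  obtain ⟨Q', hQ'⟩ := exists_lift Q (hQ.2.1.mono fun q hq => hq.1)
  obtain ⟨h1, h2⟩ := Dt_selection (DD r y₀ a k f) (measurable_DD r y₀ a k hf) Q'
  have hae : AEMeasurable (Dt (DD r y₀ a k f)) Q := by
    rw [← hQ', (embPM Y).aemeasurable_map_iff]
    exact h1
  rw [eInt_red ha hk hQ (hjQ ▸ hp) hae hh, hjQ, hh p hp]
  refine EReal.sub_le_sub ?_ le_rfl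
  rw [EReal.coe_ennreal_le_coe_ennreal_iff, ← hQ', (embPM Y).lintegral_map]
  rwa [joinP_coe, hQ', hjQ] at h2
end
end WOTaux

namespace WOTaux
open WOT

theorem slln {S : Type*} [MeasurableSpace S] (Q : Measure S) [IsProbabilityMeasure Q]
    {h : S → ℝ≥0∞} (hh : Measurable h) (hfin : ∫⁻ s, h s ∂Q ≠ ⊤) :
    ∀ᵐ ω ∂(Measure.infinitePi (fun _ : ℕ => Q)), (∀ i, h (ω i) < ⊤) ∧
      Tendsto (fun n : ℕ => (∑ i ∈ Finset.range n, (h (ω i)).toReal) / n) atTop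
        (𝓝 (∫⁻ s, h s ∂Q).toReal) := by
  have mp : ∀ i : ℕ, MeasurePreserving (Function.eval i) (Measure.infinitePi (fun _ : ℕ => Q)) Q :=
    fun i => measurePreserving_eval_infinitePi (fun _ : ℕ => Q) i
  have h1 : ∀ i, ∀ᵐ ω ∂(Measure.infinitePi (fun _ : ℕ => Q)), h (ω i) < ⊤ := fun i =>
    (mp i).quasiMeasurePreserving.ae (ae_lt_top hh hfin)
  have h_integ : Integrable (fun s => (h s).toReal) Q :=
    integrable_toReal_of_lintegral_ne_top hh.aemeasurable hfin
  have hid : ∀ i : ℕ, ProbabilityTheory.IdentDistrib (fun ω : ℕ → S => (h (ω i)).toReal)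
      (fun s => (h s).toReal) (Measure.infinitePi (fun _ : ℕ => Q)) Q := fun i =>
    { aemeasurable_fst := (hh.ennreal_toReal.comp (measurable_pi_apply i)).aemeasurable
      aemeasurable_snd := hh.ennreal_toReal.aemeasurable
      map_eq := by
        have : (fun ω : ℕ → S => (h (ω i)).toReal) = (fun s => (h s).toReal) ∘ Function.eval i := rfl
        rw [this, ← Measure.map_map hh.ennreal_toReal (measurable_pi_apply i), (mp i).map_eq] }
  have h2 := ProbabilityTheory.strong_law_ae_real
    (μ := Measure.infinitePi (fun _ : ℕ => Q))
    (fun (i : ℕ) (ω : ℕ → S) => (h (ω i)).toReal)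
    ((hid 0).integrable_iff.2 h_integ)
    (fun i j hij => (ProbabilityTheory.iIndepFun_infinitePi
      (X := fun (_ : ℕ) (s : S) => (h s).toReal) (P := fun _ => Q)
        (fun _ => hh.ennreal_toReal)).indepFun hij)
    (fun i => (hid i).trans (hid 0).symm)
  rw [(hid 0).integral_eq, integral_toReal hh.aemeasurable (ae_lt_top hh hfin)] at h2
  filter_upwards [ae_all_iff.2 h1, h2] with ω a b using ⟨a, b⟩

section
variable {Y : Type*} [MeasurableSpace Y]

/-- weights for running averages -/
def wt (n : ℕ) : ℝ≥0 := (n + 1) / (n + 2)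

theorem wt_le (n : ℕ) : wt n ≤ 1 := by
  unfold wt
  rw [div_le_one (by positivity)]
  gcongr; norm_num

theorem wt_coe (n : ℕ) : ((wt n : ℝ≥0) : ℝ) = (n + 1) / (n + 2) := by simp [wt]

theorem wt_coe' (n : ℕ) : ((1 - wt n : ℝ≥0) : ℝ) = 1 / (n + 2) := by
  rw [NNReal.coe_sub (wt_le n), wt_coe]
  have : (n : ℝ) + 2 ≠ 0 := by positivity
  push_cast; field_simp; ring

/-- running averages of a sequence of measures -/
def avg (q : ℕ → Measure Y) : ℕ → Measure Y
  | 0 => q 0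
  | n + 1 => ((wt n : ℝ≥0) : ℝ≥0∞) • avg q n + ((1 - wt n : ℝ≥0) : ℝ≥0∞) • q (n + 1)

theorem lintegral_avg (q : ℕ → Measure Y) (h : Y → ℝ≥0∞) (hfin : ∀ i, ∫⁻ y, h y ∂(q i) < ⊤) (n : ℕ) :
    ∫⁻ y, h y ∂(avg q n) < ⊤ ∧ (∫⁻ y, h y ∂(avg q n)).toReal =
      (∑ i ∈ Finset.range (n + 1), (∫⁻ y, h y ∂(q i)).toReal) / ((n + 1 : ℕ) : ℝ) := by
  induction n with
  | zero => simp [avg, hfin 0]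
  | succ n ih =>
    have e : ∫⁻ y, h y ∂(avg q (n + 1)) = ((wt n : ℝ≥0) : ℝ≥0∞) * ∫⁻ y, h y ∂(avg q n) +
        ((1 - wt n : ℝ≥0) : ℝ≥0∞) * ∫⁻ y, h y ∂(q (n + 1)) := by
      simp only [avg, lintegral_add_measure, lintegral_smul_measure, smul_eq_mul]
    have f1 : ((wt n : ℝ≥0) : ℝ≥0∞) * ∫⁻ y, h y ∂(avg q n) < ⊤ :=
      ENNReal.mul_lt_top ENNReal.coe_lt_top ih.1
    have f2 : ((1 - wt n : ℝ≥0) : ℝ≥0∞) * ∫⁻ y, h y ∂(q (n + 1)) < ⊤ :=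
      ENNReal.mul_lt_top ENNReal.coe_lt_top (hfin _)
    refine ⟨by rw [e]; exact ENNReal.add_lt_top.2 ⟨f1, f2⟩, ?_⟩
    rw [e, ENNReal.toReal_add f1.ne f2.ne, ENNReal.toReal_mul, ENNReal.toReal_mul,
      ENNReal.coe_toReal, ENNReal.coe_toReal, wt_coe, wt_coe', ih.2,
      Finset.sum_range_succ _ (n + 1)]
    push_cast
    have h1 : (n : ℝ) + 2 ≠ 0 := by positivity
    have h2 : (n : ℝ) + 1 ≠ 0 := by positivity
    have h3 : (n : ℝ) + 1 + 1 ≠ 0 := by positivity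
    field_simp
    ring
end

section
variable {Y : Type*} [MeasurableSpace Y] [MetricSpace Y] [SecondCountableTopology Y] [BorelSpace Y]

theorem avg_prob (q : ℕ → Measure Y) (hq : ∀ i, IsProbabilityMeasure (q i)) (n : ℕ) :
    IsProbabilityMeasure (avg q n) := by
  have h1 : ∀ i, ∫⁻ y, 1 ∂(q i) = 1 := fun i => by haveI := hq i; simp
  obtain ⟨a, b⟩ := lintegral_avg q (fun _ => 1) (fun i => by rw [h1]; simp) n
  simp only [h1] at b
  constructor
  rw [← lintegral_one]
  rw [← ENNReal.toReal_eq_one_iff, b]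
  have : ((n + 1 : ℕ) : ℝ) ≠ 0 := by positivity
  simp only [ENNReal.toReal_one, Finset.sum_const, Finset.card_range, nsmul_eq_mul, mul_one]
  exact div_self this

theorem jensen {r : ℝ} (hr : 1 ≤ r) {y₀ : Y} {a k : ℝ}
    {f : Measure Y → EReal} (hf : Measurable f)
    (hlb : ∀ p ∈ Pr r y₀, ((-(gg r y₀ a k p) : ℝ) : EReal) ≤ f p)
    {G : Measure Y → EReal} (hG1 : LscWr1 r y₀ G) (hG2 : EConvexOn (Pr r y₀) G)
    (hG3 : ∀ q ∈ Pr r y₀, G q ≤ f q) (Q : ProbabilityMeasure (ProbabilityMeasure Y))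
    (hp : (joinP Q : Measure Y) ∈ Pr r y₀) :
    G (joinP Q : Measure Y) ≤
      ((∫⁻ q, DD r y₀ a k f (q : Measure Y) ∂(Q : Measure (ProbabilityMeasure Y)) : ℝ≥0∞) : EReal)
        - (gg r y₀ a k (joinP Q : Measure Y) : EReal) := by
  set D := DD r y₀ a k f with hD
  have hDm : Measurable fun q : ProbabilityMeasure Y => D (q : Measure Y) :=
    (measurable_DD r y₀ a k hf).comp measurable_PM_coe
  by_cases htop : ∫⁻ q, D (q : Measure Y) ∂(Q : Measure (ProbabilityMeasure Y)) = ⊤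
  · rw [htop]; simp
  have hmm : Measurable fun q : ProbabilityMeasure Y => mom r y₀ (q : Measure Y) :=
    (measurable_mom r y₀).comp measurable_PM_coe
  have hmom : ∫⁻ q, mom r y₀ (q : Measure Y) ∂(Q : Measure (ProbabilityMeasure Y)) =
      mom r y₀ (joinP Q : Measure Y) := (lintegral_joinP Q (measurable_cost r y₀)).symm
  have hGm : ∀ G ∈ GG Y, Measurable fun q : ProbabilityMeasure Y => (q : Measure Y) G := fun G hG =>
    (Measure.measurable_coe (GG_open hG).measurableSet).comp measurable_PM_coe
  have hGj : ∀ G ∈ GG Y, ∫⁻ q, (q : Measure Y) G ∂(Q : Measure (ProbabilityMeasure Y)) =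
      (joinP Q : Measure Y) G := by
    intro G hG
    have hm := (GG_open hG).measurableSet
    have := lintegral_joinP Q (f := G.indicator 1) (measurable_one.indicator hm)
    simpa only [lintegral_indicator_one hm] using this.symm
  have s1 := slln (Q : Measure (ProbabilityMeasure Y)) hDm htop
  have s2 := slln (Q : Measure (ProbabilityMeasure Y)) hmm (by rw [hmom]; exact hp.2.ne)
  have s3 := (ae_ball_iff GG_countable).2 fun G hG =>
    slln (Q : Measure (ProbabilityMeasure Y)) (hGm G hG) (by rw [hGj G hG]; exact measure_ne_top _ _)
  obtain ⟨ω, ⟨d1, d2⟩, ⟨m1, m2⟩, g⟩ := (s1.and (s2.and s3)).exists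
  set q : ℕ → Measure Y := fun i => (ω i : Measure Y) with hq
  have hqP : ∀ i, q i ∈ Pr r y₀ := fun i => ⟨inferInstanceAs (IsProbabilityMeasure (ω i : Measure Y)), m1 i⟩
  have hprob : ∀ n, IsProbabilityMeasure (avg q n) := avg_prob q fun i => (hqP i).1
  set A : ℕ → ProbabilityMeasure Y := fun n => ⟨avg q n, hprob n⟩ with hA
  have hAP : ∀ n, avg q n ∈ Pr r y₀ := fun n =>
    ⟨hprob n, (lintegral_avg q _ (fun i => m1 i) n).1⟩
  have hAw : Tendsto A atTop (𝓝 (joinP Q)) := by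
    refine tendsto_of_GG fun G hG => ?_
    have hm := (GG_open hG).measurableSet
    have hfin : ∀ i, ∫⁻ y, G.indicator 1 y ∂(q i) < ⊤ := fun i => by
      rw [lintegral_indicator_one hm]; exact (g G hG).1 i
    have e : ∀ n, (A n : Measure Y) G = ENNReal.ofReal
        ((∑ i ∈ Finset.range (n + 1), ((ω i : Measure Y) G).toReal) / ((n + 1 : ℕ) : ℝ)) := by
      intro n
      have := (lintegral_avg q (G.indicator 1) hfin n).2
      simp only [lintegral_indicator_one hm] at this
      rw [← this]
      exact (ENNReal.ofReal_toReal (measure_ne_top (A n : Measure Y) _)).symm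
    have ht := (ENNReal.tendsto_ofReal ((g G hG).2)).comp (tendsto_add_atTop_nat 1)
    rw [hGj G hG, ENNReal.ofReal_toReal (measure_ne_top _ _)] at ht
    refine le_of_eq (Tendsto.liminf_eq ?_).symm
    exact ht.congr fun n => (e n).symm
  have hAm : Tendsto (fun n => mom r y₀ (A n : Measure Y)) atTop (𝓝 (mom r y₀ (joinP Q : Measure Y))) := by
    have ht := (ENNReal.tendsto_ofReal m2).comp (tendsto_add_atTop_nat 1)
    rw [hmom, ENNReal.ofReal_toReal (show mom r y₀ (joinP Q : Measure Y) ≠ ⊤ from hp.2.ne)] at ht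
    refine ht.congr fun n => ?_
    obtain ⟨u, v⟩ := lintegral_avg q _ (fun i => m1 i) n
    have : mom r y₀ (A n : Measure Y) = ENNReal.ofReal (mom r y₀ (A n : Measure Y)).toReal :=
      (ENNReal.ofReal_toReal u.ne).symm
    rw [this]
    exact congrArg ENNReal.ofReal v.symm
  have hW := WrTendsto_of_weak hr y₀ (joinP Q) A hAw hp.2 hAm
  have hlim := hG1 _ _ hp hAP hW
  set c : ℕ → ℝ := fun i => (D (q i)).toReal - gg r y₀ a k (q i) with hc
  have hGc : ∀ i, G (q i) ≤ (c i : EReal) := by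
    intro i
    refine (hG3 _ (hqP i)).trans (le_of_eq ?_)
    rw [f_eq (hlb _ (hqP i)), hc, EReal.coe_sub, ← hD]
    congr 1
    exact (EReal.coe_ennreal_toReal (d1 i).ne).symm
  have hconv : ∀ n, G (avg q n) ≤ (((∑ i ∈ Finset.range (n + 1), c i) / ((n + 1 : ℕ) : ℝ) : ℝ) : EReal) := by
    intro n
    induction n with
    | zero => simpa [avg] using hGc 0
    | succ n ih =>
      refine (hG2 _ (hAP n) _ (hqP (n + 1)) (wt n) (wt_le n)).trans ?_
      rw [wt_coe']
      refine (add_le_add (mul_le_mul_of_nonneg_left ih (by exact_mod_cast (wt n).2))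
        (mul_le_mul_of_nonneg_left (hGc (n + 1)) (by
          have : (0 : ℝ) ≤ 1 / (n + 2) := by positivity
          exact_mod_cast this))).trans (le_of_eq ?_)
      rw [← EReal.coe_mul, ← EReal.coe_mul, ← EReal.coe_add, wt_coe, Finset.sum_range_succ _ (n + 1)]
      congr 1
      push_cast
      have h1 : (n : ℝ) + 2 ≠ 0 := by positivity
      have h2 : (n : ℝ) + 1 ≠ 0 := by positivity
      have h3 : (n : ℝ) + 1 + 1 ≠ 0 := by positivity
      field_simp
      ring
  have hcl : Tendsto (fun n : ℕ => (∑ i ∈ Finset.range (n + 1), c i) / ((n + 1 : ℕ) : ℝ)) atTop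
      (𝓝 ((∫⁻ q, D (q : Measure Y) ∂(Q : Measure (ProbabilityMeasure Y))).toReal -
        gg r y₀ a k (joinP Q : Measure Y))) := by
    have t1 := d2.comp (tendsto_add_atTop_nat 1)
    have t2 := m2.comp (tendsto_add_atTop_nat 1)
    rw [hmom] at t2
    refine (t1.sub ((t2.const_mul k).const_add a)).congr fun n => ?_
    simp only [hc, gg, Finset.sum_sub_distrib, Finset.sum_add_distrib, ← Finset.mul_sum,
      Finset.sum_const, Finset.card_range, nsmul_eq_mul, Function.comp]
    have h2 : ((n + 1 : ℕ) : ℝ) ≠ 0 := by positivity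
    field_simp
    rfl
  have hcl' := (continuous_coe_real_ereal.tendsto _).comp hcl
  have hfinal : liminf (fun n => G (avg q n)) atTop ≤ _ :=
    (liminf_le_liminf (Eventually.of_forall hconv)).trans (le_of_eq hcl'.liminf_eq)
  refine hlim.trans (hfinal.trans (le_of_eq ?_))
  rw [EReal.coe_sub]
  congr 1
  exact EReal.coe_ennreal_toReal htop
end
end WOTaux

namespace WOTaux
open WOT

section
variable {Y : Type*} [MeasurableSpace Y]

def mkPM (m : Measure Y) (h : IsProbabilityMeasure m) : ProbabilityMeasure Y := ⟨m, h⟩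

open Classical in
def NP (h : Y → ℝ≥0) (ρ : ProbabilityMeasure Y) : ProbabilityMeasure Y :=
  if H : (∫⁻ y, h y ∂(ρ : Measure Y)) ≠ 0 ∧ (∫⁻ y, h y ∂(ρ : Measure Y)) ≠ ⊤ then
    mkPM ((∫⁻ y, h y ∂(ρ : Measure Y))⁻¹ • (ρ : Measure Y).withDensity (fun y => h y)) (by
      constructor
      simp only [Measure.smul_apply, smul_eq_mul, withDensity_apply _ MeasurableSet.univ,
        Measure.restrict_univ]
      exact ENNReal.inv_mul_cancel H.1 H.2)
  else ρ

theorem NP_coe {h : Y → ℝ≥0} {ρ : ProbabilityMeasure Y}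
    (h0 : (∫⁻ y, h y ∂(ρ : Measure Y)) ≠ 0) (h1 : (∫⁻ y, h y ∂(ρ : Measure Y)) ≠ ⊤) :
    (NP h ρ : Measure Y) =
      (∫⁻ y, h y ∂(ρ : Measure Y))⁻¹ • (ρ : Measure Y).withDensity (fun y => h y) := by
  rw [NP, dif_pos ⟨h0, h1⟩]; rfl

theorem lintegral_NP {h : Y → ℝ≥0} (hm : Measurable h) {ρ : ProbabilityMeasure Y}
    (h0 : (∫⁻ y, h y ∂(ρ : Measure Y)) ≠ 0) (h1 : (∫⁻ y, h y ∂(ρ : Measure Y)) ≠ ⊤)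
    {f : Y → ℝ≥0∞} (hf : Measurable f) :
    ∫⁻ y, f y ∂(NP h ρ : Measure Y) =
      (∫⁻ y, h y ∂(ρ : Measure Y))⁻¹ * ∫⁻ y, h y * f y ∂(ρ : Measure Y) := by
  rw [NP_coe h0 h1, lintegral_smul_measure, lintegral_withDensity_eq_lintegral_mul _
    hm.coe_nnreal_ennreal hf]
  rfl

theorem NP_apply {h : Y → ℝ≥0} (hm : Measurable h) {ρ : ProbabilityMeasure Y}
    (h0 : (∫⁻ y, h y ∂(ρ : Measure Y)) ≠ 0) (h1 : (∫⁻ y, h y ∂(ρ : Measure Y)) ≠ ⊤)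
    {A : Set Y} (hA : MeasurableSet A) :
    (NP h ρ : Measure Y) A =
      (∫⁻ y, h y ∂(ρ : Measure Y))⁻¹ * ∫⁻ y, A.indicator (fun y => (h y : ℝ≥0∞)) y ∂(ρ : Measure Y) := by
  rw [NP_coe h0 h1, Measure.smul_apply, smul_eq_mul, withDensity_apply _ hA, lintegral_indicator hA]

theorem measurable_NP {h : Y → ℝ≥0} (hm : Measurable h) : Measurable (NP h) := by
  classical
  refine measurable_PM_of ?_
  have hI : Measurable fun ρ : ProbabilityMeasure Y => ∫⁻ y, h y ∂(ρ : Measure Y) :=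
    (Measure.measurable_lintegral hm.coe_nnreal_ennreal).comp measurable_PM_coe
  have hS : MeasurableSet {ρ : ProbabilityMeasure Y | (∫⁻ y, h y ∂(ρ : Measure Y)) ≠ 0 ∧
      (∫⁻ y, h y ∂(ρ : Measure Y)) ≠ ⊤} :=
    (hI (measurableSet_singleton 0).compl).inter (hI (measurableSet_singleton ⊤).compl)
  refine Measure.measurable_of_measurable_coe _ fun A hA => ?_
  have hIA : Measurable fun ρ : ProbabilityMeasure Y =>
      ∫⁻ y, A.indicator (fun y => (h y : ℝ≥0∞)) y ∂(ρ : Measure Y) :=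
    (Measure.measurable_lintegral (hm.coe_nnreal_ennreal.indicator hA)).comp measurable_PM_coe
  have : (fun ρ : ProbabilityMeasure Y => (NP h ρ : Measure Y) A) = fun ρ =>
      if ρ ∈ {ρ : ProbabilityMeasure Y | (∫⁻ y, h y ∂(ρ : Measure Y)) ≠ 0 ∧
      (∫⁻ y, h y ∂(ρ : Measure Y)) ≠ ⊤} then (∫⁻ y, h y ∂(ρ : Measure Y))⁻¹ *
        ∫⁻ y, A.indicator (fun y => (h y : ℝ≥0∞)) y ∂(ρ : Measure Y) else (ρ : Measure Y) A := by
    funext ρ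
    split_ifs with H
    · exact NP_apply hm H.1 H.2 hA
    · have H' : ¬ ((∫⁻ y, h y ∂(ρ : Measure Y)) ≠ 0 ∧ (∫⁻ y, h y ∂(ρ : Measure Y)) ≠ ⊤) := H
      rw [NP, dif_neg H']
  rw [this]
  exact Measurable.ite hS (hI.inv.mul hIA) ((Measure.measurable_coe hA).comp measurable_PM_coe)

theorem NP_NP {h g : Y → ℝ≥0} (hm : Measurable h) (gm : Measurable g) (hgh : ∀ y, h y * g y = 1)
    {ρ : ProbabilityMeasure Y}
    (h0 : (∫⁻ y, h y ∂(ρ : Measure Y)) ≠ 0) (h1 : (∫⁻ y, h y ∂(ρ : Measure Y)) ≠ ⊤) :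
    NP g (NP h ρ) = ρ := by
  have hgh' : ∀ y, (h y : ℝ≥0∞) * g y = 1 := fun y => by exact_mod_cast hgh y
  have e1 : ∫⁻ y, g y ∂(NP h ρ : Measure Y) = (∫⁻ y, h y ∂(ρ : Measure Y))⁻¹ := by
    rw [lintegral_NP hm h0 h1 gm.coe_nnreal_ennreal]
    simp [hgh']
  have a0 : ∫⁻ y, g y ∂(NP h ρ : Measure Y) ≠ 0 := by rw [e1]; exact ENNReal.inv_ne_zero.2 h1
  have a1 : ∫⁻ y, g y ∂(NP h ρ : Measure Y) ≠ ⊤ := by rw [e1]; exact ENNReal.inv_ne_top.2 h0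
  refine Subtype.ext (Measure.ext fun A hA => ?_)
  refine (NP_apply gm a0 a1 hA).trans ?_
  rw [lintegral_NP hm h0 h1 (gm.coe_nnreal_ennreal.indicator hA), e1, inv_inv, ← mul_assoc,
    ENNReal.mul_inv_cancel h0 h1, one_mul]
  have : ∀ y, (h y : ℝ≥0∞) * A.indicator (fun y => (g y : ℝ≥0∞)) y = A.indicator 1 y := fun y => by
    by_cases hy : y ∈ A <;> simp [hy, hgh']
  simp_rw [this]
  exact lintegral_indicator_one hA

end

section
variable {Y : Type*} [MeasurableSpace Y] [MetricSpace Y] [SecondCountableTopology Y] [BorelSpace Y]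

theorem lsc_indicator {Z : Type*} [TopologicalSpace Z] {G : Set Z} (hG : IsOpen G) {h : Z → ℝ≥0∞}
    (hh : Continuous h) : LowerSemicontinuous (G.indicator h) := by
  intro y c hc
  by_cases hy : y ∈ G
  · rw [indicator_of_mem hy] at hc
    filter_upwards [hG.mem_nhds hy, hh.continuousAt.eventually_const_lt hc] with z hz1 hz2
    rwa [indicator_of_mem hz1]
  · rw [indicator_of_notMem hy] at hc
    exact absurd hc not_lt_bot

theorem NP_tendsto {h : Y → ℝ≥0} (hc : Continuous h) {ρ : ProbabilityMeasure Y}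
    {ρs : ℕ → ProbabilityMeasure Y} (ht : Tendsto ρs atTop (𝓝 ρ))
    (h0 : (∫⁻ y, h y ∂(ρ : Measure Y)) ≠ 0) (h1 : (∫⁻ y, h y ∂(ρ : Measure Y)) ≠ ⊤)
    (h0' : ∀ n, (∫⁻ y, h y ∂(ρs n : Measure Y)) ≠ 0)
    (h1' : ∀ n, (∫⁻ y, h y ∂(ρs n : Measure Y)) ≠ ⊤)
    (hI : Tendsto (fun n => ∫⁻ y, h y ∂(ρs n : Measure Y)) atTop (𝓝 (∫⁻ y, h y ∂(ρ : Measure Y)))) :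
    Tendsto (fun n => NP h (ρs n)) atTop (𝓝 (NP h ρ)) := by
  refine tendsto_of_forall_isOpen_le_liminf' fun G hG => ?_
  rw [NP_apply hc.measurable h0 h1 hG.measurableSet]
  simp_rw [NP_apply hc.measurable (h0' _) (h1' _) hG.measurableSet]
  have hI' : Tendsto (fun n => (∫⁻ y, h y ∂(ρs n : Measure Y))⁻¹) atTop
    (𝓝 (∫⁻ y, h y ∂(ρ : Measure Y))⁻¹) := ENNReal.tendsto_inv_iff.2 hI
  refine le_trans ?_ ENNReal.le_liminf_mul
  rw [hI'.liminf_eq]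
  gcongr
  exact lsc_lintegral_PM ht (lsc_indicator hG (ENNReal.continuous_coe.comp hc))

def ww (r : ℝ) (y₀ : Y) (y : Y) : ℝ≥0 := 1 + (dist y y₀ ^ r).toNNReal
def vv (r : ℝ) (y₀ : Y) (y : Y) : ℝ≥0 := (ww r y₀ y)⁻¹

theorem continuous_ww {r : ℝ} (hr : 1 ≤ r) (y₀ : Y) : Continuous (ww r y₀) :=
  continuous_const.add (continuous_real_toNNReal.comp
    ((continuous_id.dist continuous_const).rpow_const fun _ => Or.inr (by linarith)))

theorem ww_ge (r : ℝ) (y₀ y : Y) : 1 ≤ ww r y₀ y := le_self_add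

theorem ww_ne (r : ℝ) (y₀ y : Y) : ww r y₀ y ≠ 0 := (zero_lt_one.trans_le (ww_ge r y₀ y)).ne'

theorem continuous_vv {r : ℝ} (hr : 1 ≤ r) (y₀ : Y) : Continuous (vv r y₀) :=
  (continuous_ww hr y₀).inv₀ (ww_ne r y₀)

theorem vv_le (r : ℝ) (y₀ y : Y) : vv r y₀ y ≤ 1 := inv_le_one_of_one_le₀ (ww_ge r y₀ y)

theorem lintegral_ww (r : ℝ) (y₀ : Y) (p : Measure Y) [IsProbabilityMeasure p] :
    ∫⁻ y, ww r y₀ y ∂p = 1 + mom r y₀ p := by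
  simp only [ww, ENNReal.coe_add, ENNReal.coe_one]
  rw [lintegral_add_left measurable_const]
  simp [mom, ENNReal.ofReal]

theorem vint_ne_zero (r : ℝ) (hr : 1 ≤ r) (y₀ : Y) (p : Measure Y) [IsProbabilityMeasure p] :
    ∫⁻ y, vv r y₀ y ∂p ≠ 0 := by
  rw [← pos_iff_ne_zero, lintegral_pos_iff_support (continuous_vv hr y₀).measurable.coe_nnreal_ennreal]
  have : Function.support (fun y => (vv r y₀ y : ℝ≥0∞)) = univ := by
    ext y; simp [vv, ww_ne]
  rw [this]; simp

theorem vint_ne_top (r : ℝ) (y₀ : Y) (p : Measure Y) [IsProbabilityMeasure p] :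
    ∫⁻ y, vv r y₀ y ∂p ≠ ⊤ := by
  refine ne_top_of_le_ne_top ENNReal.one_ne_top ((lintegral_mono fun y =>
    (ENNReal.coe_le_coe.2 (vv_le r y₀ y))).trans ?_)
  simp

theorem vint_tendsto (r : ℝ) (hr : 1 ≤ r) (y₀ : Y) {ρ : ProbabilityMeasure Y}
    {ρs : ℕ → ProbabilityMeasure Y} (ht : Tendsto ρs atTop (𝓝 ρ)) :
    Tendsto (fun n => ∫⁻ y, vv r y₀ y ∂(ρs n : Measure Y)) atTop
      (𝓝 (∫⁻ y, vv r y₀ y ∂(ρ : Measure Y))) := by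
  have := ProbabilityMeasure.tendsto_iff_forall_lintegral_tendsto.1 ht
    (BoundedContinuousFunction.mkOfBound ⟨vv r y₀, continuous_vv hr y₀⟩ 1 (fun x y => by
      have h1 := vv_le r y₀ x
      have h2 := vv_le r y₀ y
      have h1' : (vv r y₀ x : ℝ) ≤ 1 := by exact_mod_cast h1
      have h2' : (vv r y₀ y : ℝ) ≤ 1 := by exact_mod_cast h2
      have h3 := NNReal.coe_nonneg (vv r y₀ x)
      have h4 := NNReal.coe_nonneg (vv r y₀ y)
      rw [NNReal.dist_eq]
      show |(vv r y₀ x : ℝ) - vv r y₀ y| ≤ 1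
      rw [abs_le]; constructor <;> linarith))
  exact this

theorem mom_S (r : ℝ) (hr : 1 ≤ r) (y₀ : Y) (ρ : ProbabilityMeasure Y) :
    1 + mom r y₀ (NP (vv r y₀) ρ : Measure Y) = (∫⁻ y, vv r y₀ y ∂(ρ : Measure Y))⁻¹ := by
  rw [← lintegral_ww, lintegral_NP (continuous_vv hr y₀).measurable (vint_ne_zero r hr y₀ _)
    (vint_ne_top r y₀ _) (continuous_ww hr y₀).measurable.coe_nnreal_ennreal]
  have : ∀ y, (vv r y₀ y : ℝ≥0∞) * ww r y₀ y = 1 := fun y => by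
    rw [← ENNReal.coe_mul, vv, inv_mul_cancel₀ (ww_ne r y₀ y), ENNReal.coe_one]
  simp [this]

theorem mom_S_fin (r : ℝ) (hr : 1 ≤ r) (y₀ : Y) (ρ : ProbabilityMeasure Y) :
    mom r y₀ (NP (vv r y₀) ρ : Measure Y) < ⊤ := by
  refine (le_add_self (a := mom r y₀ (NP (vv r y₀) ρ : Measure Y)) (b := 1)).trans_lt ?_
  rw [mom_S r hr]
  exact (ENNReal.inv_ne_top.2 (vint_ne_zero r hr y₀ _)).lt_top

theorem S_tendsto (r : ℝ) (hr : 1 ≤ r) (y₀ : Y) {ρ : ProbabilityMeasure Y}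
    {ρs : ℕ → ProbabilityMeasure Y} (ht : Tendsto ρs atTop (𝓝 ρ)) :
    Tendsto (fun n => NP (vv r y₀) (ρs n)) atTop (𝓝 (NP (vv r y₀) ρ)) :=
  NP_tendsto (continuous_vv hr y₀) ht (vint_ne_zero r hr y₀ _)
    (vint_ne_top r y₀ _) (fun _ => vint_ne_zero r hr y₀ _)
    (fun _ => vint_ne_top r y₀ _) (vint_tendsto r hr y₀ ht)

theorem S_Wr (r : ℝ) (hr : 1 ≤ r) (y₀ : Y) {ρ : ProbabilityMeasure Y}
    {ρs : ℕ → ProbabilityMeasure Y} (ht : Tendsto ρs atTop (𝓝 ρ)) :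
    WrTendsto r (fun n => (NP (vv r y₀) (ρs n) : Measure Y)) (NP (vv r y₀) ρ : Measure Y) := by
  refine WrTendsto_of_weak hr y₀ _ _ (S_tendsto r hr y₀ ht) (mom_S_fin r hr y₀ ρ) ?_
  have h := ENNReal.tendsto_inv_iff.2 (vint_tendsto r hr y₀ ht)
  simp_rw [← mom_S r hr] at h
  have h2 := ENNReal.Tendsto.sub h (tendsto_const_nhds (x := (1 : ℝ≥0∞))) (Or.inr ENNReal.one_ne_top)
  simpa [ENNReal.add_sub_cancel_left] using h2

theorem ST (r : ℝ) (hr : 1 ≤ r) (y₀ : Y) {ρ : ProbabilityMeasure Y}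
    (hρ : mom r y₀ (ρ : Measure Y) < ⊤) : NP (vv r y₀) (NP (ww r y₀) ρ) = ρ := by
  refine NP_NP (continuous_ww hr y₀).measurable (continuous_vv hr y₀).measurable
    (fun y => mul_inv_cancel₀ (ww_ne r y₀ y)) ?_ ?_ <;> rw [lintegral_ww]
  · simp
  · exact ENNReal.add_ne_top.2 ⟨ENNReal.one_ne_top, hρ.ne⟩

theorem T_tendsto (r : ℝ) (hr : 1 ≤ r) (y₀ : Y) {ρ : ProbabilityMeasure Y}
    {ρs : ℕ → ProbabilityMeasure Y} (hρ : mom r y₀ (ρ : Measure Y) < ⊤)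
    (hρs : ∀ n, mom r y₀ (ρs n : Measure Y) < ⊤)
    (ht : WrTendsto r (fun n => (ρs n : Measure Y)) ρ) :
    Tendsto (fun n => NP (ww r y₀) (ρs n)) atTop (𝓝 (NP (ww r y₀) ρ)) := by
  refine NP_tendsto (continuous_ww hr y₀) (weak_of_WrTendsto hr _ _ ht) ?_ ?_ ?_ ?_ ?_ <;>
    simp_rw [lintegral_ww]
  · simp
  · exact ENNReal.add_ne_top.2 ⟨ENNReal.one_ne_top, hρ.ne⟩
  · simp
  · exact fun n => ENNReal.add_ne_top.2 ⟨ENNReal.one_ne_top, (hρs n).ne⟩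
  · exact tendsto_const_nhds.add (mom_tendsto hr y₀ ht)

/-- tightness estimate -/
theorem T_tight (r : ℝ) (hr : 1 ≤ r) (y₀ : Y) (Q : ProbabilityMeasure (ProbabilityMeasure Y))
    (hm : mom r y₀ (joinP Q : Measure Y) < ⊤) {A : Set Y} (hA : MeasurableSet A) :
    ∫⁻ q, (NP (ww r y₀) q : Measure Y) A ∂(Q : Measure (ProbabilityMeasure Y)) ≤
      (1 + mom r y₀ (joinP Q : Measure Y)) * (NP (ww r y₀) (joinP Q) : Measure Y) A := by
  have hwm := (continuous_ww hr y₀).measurable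
  have h1 : (1 + mom r y₀ (joinP Q : Measure Y)) ≠ ⊤ := ENNReal.add_ne_top.2 ⟨ENNReal.one_ne_top, hm.ne⟩
  have h0 : (1 + mom r y₀ (joinP Q : Measure Y)) ≠ 0 := by simp
  rw [NP_apply hwm (by rwa [lintegral_ww]) (by rwa [lintegral_ww]) hA, lintegral_ww, ← mul_assoc,
    ENNReal.mul_inv_cancel h0 h1, one_mul,
    lintegral_joinP Q (hwm.coe_nnreal_ennreal.indicator hA)]
  have hfin : ∀ᵐ q : ProbabilityMeasure Y ∂(Q : Measure (ProbabilityMeasure Y)), mom r y₀ (q : Measure Y) < ⊤ := by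
    refine ae_lt_top (f := fun q : ProbabilityMeasure Y => mom r y₀ (q : Measure Y))
      ((measurable_mom r y₀).comp measurable_PM_coe) ?_
    have := lintegral_joinP Q (measurable_cost r y₀)
    have h2 : ∫⁻ q, mom r y₀ (q : Measure Y) ∂(Q : Measure (ProbabilityMeasure Y)) =
      mom r y₀ (joinP Q : Measure Y) := this.symm
    exact h2 ▸ hm.ne
  refine lintegral_mono_ae ?_
  filter_upwards [hfin] with q hq
  rw [NP_apply hwm (by simp [lintegral_ww]) (by rw [lintegral_ww]; exact ENNReal.add_ne_top.2 ⟨ENNReal.one_ne_top, hq.ne⟩) hA, lintegral_ww]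
  refine mul_le_of_le_one_left' ?_
  exact ENNReal.inv_le_one.2 le_self_add

end
end WOTaux

namespace WOTaux
open WOT

section
variable {Y : Type*} [MeasurableSpace Y] [MetricSpace Y] [CompleteSpace Y]
  [SecondCountableTopology Y] [BorelSpace Y]

theorem subseq_of_tight [BorelSpace (ProbabilityMeasure Y)] (Qs : ℕ → ProbabilityMeasure (ProbabilityMeasure Y))
    (R : ℕ → ProbabilityMeasure Y) (R₀ : ProbabilityMeasure Y) (hR : Tendsto R atTop (𝓝 R₀))
    (M : ℝ≥0∞) (hM0 : M ≠ 0) (hM : M ≠ ⊤)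
    (hb : ∀ n (A : Set Y), MeasurableSet A →
      ∫⁻ q, (q : Measure Y) A ∂(Qs n : Measure (ProbabilityMeasure Y)) ≤ M * (R n : Measure Y) A) :
    ∃ (Q : ProbabilityMeasure (ProbabilityMeasure Y)) (φ : ℕ → ℕ), StrictMono φ ∧
      Tendsto (Qs ∘ φ) atTop (𝓝 Q) := by
  haveI := secondCountable_PM (Y := Y)
  have hcl : IsCompact (closure (range R)) :=
    hR.isCompact_insert_range.closure_of_subset (subset_insert _ _)
  have htight := isTightMeasureSet_of_isCompact_closure hcl
  rw [isTightMeasureSet_iff_exists_isCompact_measure_compl_le] at htight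
  set u : ℕ → ℝ≥0 := fun m => (1 / 2) ^ m with hu
  have hu0 : ∀ m, u m ≠ 0 := fun m => by simp [hu]
  have hut : Tendsto u atTop (𝓝 0) := NNReal.tendsto_pow_atTop_nhds_zero_of_lt_one (by
    rw [div_lt_one (by norm_num)]; norm_num)
  have htE : IsTightMeasureSet {((μ : ProbabilityMeasure (ProbabilityMeasure Y)) :
      Measure (ProbabilityMeasure Y)) | μ ∈ range Qs} := by
    rw [isTightMeasureSet_iff_exists_isCompact_measure_compl_le]
    intro ε hε
    obtain ⟨ε', hε', hsum⟩ := ENNReal.exists_pos_sum_of_countable' hε.ne' ℕ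
    have hK : ∀ m, ∃ K : Set Y, IsCompact K ∧ ∀ n, (R n : Measure Y) Kᶜ ≤ ε' m * u m / M := by
      intro m
      obtain ⟨K, hK, h⟩ := htight (ε' m * u m / M) (ENNReal.div_pos
        (mul_ne_zero (hε' m).ne' (by simpa using hu0 m)) hM)
      exact ⟨K, hK, fun n => h _ ⟨R n, ⟨n, rfl⟩, rfl⟩⟩
    choose K hKc hKb using hK
    refine ⟨_, isCompact_setOfPred_probabilityMeasure_mass_eq_compl_isCompact_le hut hKc
      (Or.inl inferInstance), ?_⟩
    rintro _ ⟨_, ⟨n, rfl⟩, rfl⟩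
    have hsub : {μ : ProbabilityMeasure Y | ∀ m, μ (K m)ᶜ ≤ u m}ᶜ ⊆
        ⋃ m, {μ : ProbabilityMeasure Y | (u m : ℝ≥0∞) ≤ (μ : Measure Y) (K m)ᶜ} := by
      intro μ hμ
      have hμ' : ¬ ∀ m, μ (K m)ᶜ ≤ u m := hμ
      push Not at hμ'
      obtain ⟨m, hm⟩ := hμ'
      refine mem_iUnion.2 ⟨m, ?_⟩
      show (u m : ℝ≥0∞) ≤ (μ : Measure Y) (K m)ᶜ
      rw [← ProbabilityMeasure.ennreal_coeFn_eq_coeFn_toMeasure]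
      exact_mod_cast hm.le
    refine (measure_mono hsub).trans ((measure_iUnion_le _).trans (le_trans ?_ hsum.le))
    refine ENNReal.tsum_le_tsum fun m => ?_
    have hAm : MeasurableSet (K m)ᶜ := (hKc m).measurableSet.compl
    have hmk := meas_ge_le_lintegral_div (μ := (Qs n : Measure (ProbabilityMeasure Y)))
      (f := fun q : ProbabilityMeasure Y => (q : Measure Y) (K m)ᶜ)
      ((Measure.measurable_coe hAm).comp measurable_PM_coe).aemeasurable
      (ε := u m) (by simpa using hu0 m) ENNReal.coe_ne_top
    refine hmk.trans ?_
    rw [ENNReal.div_le_iff (by simpa using hu0 m) ENNReal.coe_ne_top]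
    refine (hb n _ hAm).trans ?_
    calc M * (R n : Measure Y) (K m)ᶜ ≤ M * (ε' m * u m / M) := by gcongr; exact hKb m n
      _ = ε' m * u m := ENNReal.mul_div_cancel hM0 hM
  have hcE := isCompact_closure_of_isTightMeasureSet htE
  obtain ⟨Q, -, φ, hφ, ht⟩ := hcE.tendsto_subseq (x := Qs) fun n => subset_closure ⟨n, rfl⟩
  exact ⟨Q, φ, hφ, ht⟩

theorem lsc_DS {r : ℝ} (hr : 1 ≤ r) (y₀ : Y) {D : Measure Y → ℝ≥0∞}
    (hD : ∀ (p : Measure Y) (ps : ℕ → Measure Y), p ∈ Pr r y₀ → (∀ n, ps n ∈ Pr r y₀) →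
      WrTendsto r ps p → D p ≤ liminf (fun n => D (ps n)) atTop) :
    LowerSemicontinuous fun q : ProbabilityMeasure Y => D (NP (vv r y₀) q : Measure Y) := by
  haveI := secondCountable_PM (Y := Y)
  rw [lowerSemicontinuous_iff_isClosed_preimage]
  intro c
  refine IsSeqClosed.isClosed fun qs q hqs hq => ?_
  have hS := S_Wr r hr y₀ hq
  have hmem : ∀ q : ProbabilityMeasure Y, (NP (vv r y₀) q : Measure Y) ∈ Pr r y₀ :=
    fun q => ⟨inferInstance, mom_S_fin r hr y₀ q⟩
  refine (hD _ _ (hmem q) (fun n => hmem (qs n)) hS).trans ?_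
  have : ∀ n, D (NP (vv r y₀) (qs n) : Measure Y) ≤ c := hqs
  refine (liminf_le_liminf (Eventually.of_forall this)).trans ?_
  simp

theorem Dt_lsc {r : ℝ} (hr : 1 ≤ r) (y₀ : Y) {D : Measure Y → ℝ≥0∞} (hDm : Measurable D)
    (hD : ∀ (p : Measure Y) (ps : ℕ → Measure Y), p ∈ Pr r y₀ → (∀ n, ps n ∈ Pr r y₀) →
      WrTendsto r ps p → D p ≤ liminf (fun n => D (ps n)) atTop)
    (p : Measure Y) (ps : ℕ → Measure Y) (hp : p ∈ Pr r y₀) (hps : ∀ n, ps n ∈ Pr r y₀)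
    (hw : WrTendsto r ps p) : Dt D p ≤ liminf (fun n => Dt D (ps n)) atTop := by
  haveI := secondCountable_PM (Y := Y)
  haveI := borelSpace_PM (Y := Y)
  refine le_of_forall_gt_imp_ge_of_dense fun c hc => ?_
  have hmt := mom_tendsto hr y₀ hw
  have hfr : ∃ᶠ n in atTop, Dt D (ps n) < c := frequently_lt_of_liminf_lt (by isBoundedDefault) hc
  have hev : ∀ᶠ n in atTop, mom r y₀ (ps n) < mom r y₀ p + 1 :=
    hmt.eventually_lt_const (ENNReal.lt_add_right (show mom r y₀ p ≠ ⊤ from hp.2.ne) one_ne_zero)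
  obtain ⟨φ, hφ, hφp⟩ := extraction_of_frequently_atTop (hfr.and_eventually hev)
  have hQ : ∀ n, ∃ Q : ProbabilityMeasure (ProbabilityMeasure Y),
      (joinP Q : Measure Y) = ps (φ n) ∧ ∫⁻ q : ProbabilityMeasure Y, D (q : Measure Y) ∂(Q : Measure (ProbabilityMeasure Y)) < c := by
    intro n
    have := (hφp n).1
    rw [Dt, iInf_lt_iff] at this
    obtain ⟨Q, h⟩ := this
    rw [iInf_lt_iff] at h
    obtain ⟨h1, h2⟩ := h
    exact ⟨Q, h1, h2⟩
  choose Q hQj hQc using hQ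
  set T : ProbabilityMeasure Y → ProbabilityMeasure Y := NP (ww r y₀) with hT
  set S : ProbabilityMeasure Y → ProbabilityMeasure Y := NP (vv r y₀) with hS
  have hTm : Measurable T := measurable_NP (continuous_ww hr y₀).measurable
  have hSm : Measurable S := measurable_NP (continuous_vv hr y₀).measurable
  let p' : ProbabilityMeasure Y := ⟨p, hp.1⟩
  have hmj : ∀ n, mom r y₀ (joinP (Q n) : Measure Y) < ⊤ := fun n => by
    rw [hQj]; exact (hps _).2
  have hwQ : WrTendsto r (fun n => (joinP (Q n) : Measure Y)) (p' : Measure Y) := by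
    simp_rw [hQj]
    exact hw.comp hφ.tendsto_atTop
  have hTt := T_tendsto r hr y₀ (ρ := p') hp.2 hmj hwQ
  obtain ⟨Qh, ψ, hψ, hlim⟩ := subseq_of_tight (fun n => (Q n).map hTm.aemeasurable)
    (fun n => T (joinP (Q n))) (T p') hTt (1 + (mom r y₀ p + 1)) (by simp) (by
      simpa using (show mom r y₀ p ≠ ⊤ from hp.2.ne)) (fun n A hA => by
      rw [ProbabilityMeasure.toMeasure_map, lintegral_map (f := fun q : ProbabilityMeasure Y => (q : Measure Y) A)
        ((Measure.measurable_coe hA).comp measurable_PM_coe) hTm]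
      refine (T_tight r hr y₀ (Q n) (hmj n) hA).trans ?_
      have : mom r y₀ (joinP (Q n) : Measure Y) ≤ mom r y₀ p + 1 := by
        rw [hQj]; exact (hφp n).2.le
      gcongr)
  -- S ∘ T = id almost surely
  have hST : ∀ n, ∀ᵐ q : ProbabilityMeasure Y ∂(Q n : Measure (ProbabilityMeasure Y)), S (T q) = q := by
    intro n
    have hfin : ∀ᵐ q : ProbabilityMeasure Y ∂(Q n : Measure (ProbabilityMeasure Y)),
        mom r y₀ (q : Measure Y) < ⊤ := by
      refine ae_lt_top (f := fun q : ProbabilityMeasure Y => mom r y₀ (q : Measure Y))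
        ((measurable_mom r y₀).comp measurable_PM_coe) ?_
      have := lintegral_joinP (Q n) (measurable_cost r y₀)
      have h2 : ∫⁻ q, mom r y₀ (q : Measure Y) ∂(Q n : Measure (ProbabilityMeasure Y)) =
        mom r y₀ (joinP (Q n) : Measure Y) := this.symm
      exact h2 ▸ (hmj n).ne
    filter_upwards [hfin] with q hq
    exact ST r hr y₀ hq
  have key : ∀ (F : ProbabilityMeasure Y → ℝ≥0∞), Measurable F → ∀ n,
      ∫⁻ q, F (S q) ∂((Q n).map hTm.aemeasurable : Measure (ProbabilityMeasure Y)) =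
        ∫⁻ q, F q ∂(Q n : Measure (ProbabilityMeasure Y)) := by
    intro F hF n
    rw [ProbabilityMeasure.toMeasure_map, lintegral_map (f := fun q => F (S q)) (hF.comp hSm) hTm]
    refine lintegral_congr_ae ?_
    filter_upwards [hST n] with q hq
    rw [hq]
  let Q' : ProbabilityMeasure (ProbabilityMeasure Y) := Qh.map hSm.aemeasurable
  have hDm' : Measurable fun q : ProbabilityMeasure Y => D (q : Measure Y) :=
    hDm.comp measurable_PM_coe
  have hjoin : joinP Q' = p' := by
    have h1 : Tendsto (fun n => joinP (Q (ψ n))) atTop (𝓝 (joinP Q')) := by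
      refine tendsto_of_forall_isOpen_le_liminf' fun G hG => ?_
      have hGe : ∀ Q₁ : ProbabilityMeasure (ProbabilityMeasure Y), (joinP Q₁ : Measure Y) G =
          ∫⁻ q, (q : Measure Y) G ∂(Q₁ : Measure (ProbabilityMeasure Y)) := fun Q₁ => by
        rw [joinP_coe, Measure.join_apply hG.measurableSet,
          lintegral_map (Measure.measurable_coe hG.measurableSet) measurable_PM_coe]
      have hGm : Measurable fun q : ProbabilityMeasure Y => (q : Measure Y) G :=
        (Measure.measurable_coe hG.measurableSet).comp measurable_PM_coe
      simp_rw [hGe]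
      have hl : LowerSemicontinuous fun q : ProbabilityMeasure Y => (S q : Measure Y) G := by
        rw [lowerSemicontinuous_iff_isClosed_preimage]
        intro c
        refine IsSeqClosed.isClosed fun qs q hqs hq => ?_
        refine (ProbabilityMeasure.le_liminf_measure_open_of_tendsto
          (S_tendsto r hr y₀ hq) hG).trans ?_
        have : ∀ n, (S (qs n) : Measure Y) G ≤ c := hqs
        refine (liminf_le_liminf (Eventually.of_forall this)).trans ?_
        simp
      have h3 := lsc_lintegral_PM hlim hl
      simp only [Function.comp] at h3
      simp_rw [key _ hGm] at h3
      rw [ProbabilityMeasure.toMeasure_map, lintegral_map hGm hSm]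
      exact h3
    have h2 : Tendsto (fun n => joinP (Q (ψ n))) atTop (𝓝 p') :=
      (weak_of_WrTendsto hr p' _ hwQ).comp hψ.tendsto_atTop
    exact tendsto_nhds_unique h1 h2
  calc Dt D p ≤ ∫⁻ q : ProbabilityMeasure Y, D (q : Measure Y) ∂(Q' : Measure (ProbabilityMeasure Y)) :=
        iInf₂_le Q' (by rw [hjoin]; rfl)
    _ = ∫⁻ q, D (S q : Measure Y) ∂(Qh : Measure (ProbabilityMeasure Y)) := by
        rw [ProbabilityMeasure.toMeasure_map, lintegral_map hDm' hSm]
    _ ≤ _ := lsc_lintegral_PM hlim (lsc_DS hr y₀ hD)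
    _ ≤ liminf (fun _ => c) atTop := by
        refine liminf_le_liminf (Eventually.of_forall fun n => ?_)
        exact le_of_eq_of_le (key _ hDm' (ψ n)) (hQc _).le
    _ = c := by simp

end
end WOTaux

namespace WOTaux
open WOT

theorem coe_liminf (u : ℕ → ℝ≥0∞) : ((liminf u atTop : ℝ≥0∞) : EReal) =
    liminf (fun n => (u n : EReal)) atTop :=
  Monotone.map_liminf_of_continuousAt (f := fun x : ℝ≥0∞ => (x : EReal))
    (fun _ _ h => EReal.coe_ennreal_le_coe_ennreal_iff.2 h) u
    continuous_coe_ennreal_ereal.continuousAt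

theorem ereal_lsc_add {a : EReal} {u : ℕ → EReal} (h : a ≤ liminf u atTop) {g : ℝ} {gs : ℕ → ℝ}
    (hg : Tendsto gs atTop (𝓝 g)) :
    a + (g : EReal) ≤ liminf (fun n => u n + (gs n : EReal)) atTop := by
  have h1 : liminf (fun n => (gs n : EReal)) atTop = g := (EReal.tendsto_coe.2 hg).liminf_eq
  refine le_trans ?_ (EReal.le_liminf_add (u := u) (v := fun n => (gs n : EReal)))
  rw [h1]
  exact add_le_add_left h _

theorem ereal_sub_add (D : EReal) (g : ℝ) : D - (g : EReal) + (g : EReal) = D := by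
  induction D with
  | bot => simp
  | top => simp
  | coe d => rw [← EReal.coe_sub, ← EReal.coe_add]; simp

section
variable {Y : Type*} [MeasurableSpace Y] [MetricSpace Y] [SecondCountableTopology Y] [BorelSpace Y]

theorem gg_tendsto {r : ℝ} (hr : 1 ≤ r) (y₀ : Y) (a k : ℝ) {p : Measure Y} {ps : ℕ → Measure Y}
    (hp : p ∈ Pr r y₀) (h : WrTendsto r ps p) :
    Tendsto (fun n => gg r y₀ a k (ps n)) atTop (𝓝 (gg r y₀ a k p)) := by
  have := (ENNReal.tendsto_toReal (show mom r y₀ p ≠ ⊤ from hp.2.ne)).comp (mom_tendsto hr y₀ h)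
  exact (this.const_mul k).const_add a

theorem DD_lsc {r : ℝ} (hr : 1 ≤ r) (y₀ : Y) {a k : ℝ} {f : Measure Y → EReal}
    (hlb : ∀ p ∈ Pr r y₀, ((-(gg r y₀ a k p) : ℝ) : EReal) ≤ f p) (hf : LscWr1 r y₀ f)
    (p : Measure Y) (ps : ℕ → Measure Y) (hp : p ∈ Pr r y₀) (hps : ∀ n, ps n ∈ Pr r y₀)
    (hw : WrTendsto r ps p) :
    DD r y₀ a k f p ≤ liminf (fun n => DD r y₀ a k f (ps n)) atTop := by
  rw [← EReal.coe_ennreal_le_coe_ennreal_iff, coe_liminf]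
  have h := ereal_lsc_add (hf p ps hp hps hw) (gg_tendsto hr y₀ a k hp hw)
  have e : ∀ q ∈ Pr r y₀, f q + (gg r y₀ a k q : EReal) = (DD r y₀ a k f q : EReal) := by
    intro q hq
    conv_lhs => rw [f_eq (hlb q hq)]
    exact ereal_sub_add _ _
  rw [e p hp] at h
  simp_rw [fun n => e (ps n) (hps n)] at h
  exact h

theorem mix_prob {T : Type*} [MeasurableSpace T] {t : ℝ≥0} (ht : t ≤ 1) (p q : Measure T)
    [IsProbabilityMeasure p] [IsProbabilityMeasure q] :
    IsProbabilityMeasure ((t : ℝ≥0∞) • p + ((1 - t : ℝ≥0) : ℝ≥0∞) • q) := by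
  constructor
  simp only [Measure.add_apply, Measure.smul_apply, measure_univ, smul_eq_mul, mul_one]
  rw [← ENNReal.coe_add, add_tsub_cancel_of_le ht, ENNReal.coe_one]

theorem mom_mix (r : ℝ) (y₀ : Y) (t s : ℝ≥0∞) (p q : Measure Y) :
    mom r y₀ (t • p + s • q) = t * mom r y₀ p + s * mom r y₀ q := by
  simp [mom, lintegral_add_measure, lintegral_smul_measure]

theorem mix_Pr {r : ℝ} {y₀ : Y} {t : ℝ≥0} (ht : t ≤ 1) {p q : Measure Y}
    (hp : p ∈ Pr r y₀) (hq : q ∈ Pr r y₀) :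
    ((t : ℝ≥0∞) • p + ((1 - t : ℝ≥0) : ℝ≥0∞) • q) ∈ Pr r y₀ := by
  haveI := hp.1
  haveI := hq.1
  refine ⟨mix_prob ht p q, ?_⟩
  show mom r y₀ _ < ⊤
  rw [mom_mix]
  exact ENNReal.add_lt_top.2 ⟨ENNReal.mul_lt_top ENNReal.coe_lt_top hp.2,
    ENNReal.mul_lt_top ENNReal.coe_lt_top hq.2⟩

theorem gg_mix {r : ℝ} {y₀ : Y} {a k : ℝ} {t : ℝ≥0} (ht : t ≤ 1) {p q : Measure Y}
    (hp : p ∈ Pr r y₀) (hq : q ∈ Pr r y₀) :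
    gg r y₀ a k ((t : ℝ≥0∞) • p + ((1 - t : ℝ≥0) : ℝ≥0∞) • q) =
      t * gg r y₀ a k p + ((1 - t : ℝ≥0) : ℝ) * gg r y₀ a k q := by
  have h1 : mom r y₀ p ≠ ⊤ := hp.2.ne
  have h2 : mom r y₀ q ≠ ⊤ := hq.2.ne
  rw [gg, mom_mix, ENNReal.toReal_add (ENNReal.mul_ne_top ENNReal.coe_ne_top h1)
    (ENNReal.mul_ne_top ENNReal.coe_ne_top h2), ENNReal.toReal_mul, ENNReal.toReal_mul]
  simp only [ENNReal.coe_toReal, gg, NNReal.coe_sub ht, NNReal.coe_one]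
  ring

theorem Dt_mix {D : Measure Y → ℝ≥0∞} (hD : Measurable D) {t : ℝ≥0} (ht : t ≤ 1) (p q : Measure Y)
    (hp : Dt D p ≠ ⊤) (hq : Dt D q ≠ ⊤) :
    Dt D ((t : ℝ≥0∞) • p + ((1 - t : ℝ≥0) : ℝ≥0∞) • q) ≤
      t * Dt D p + ((1 - t : ℝ≥0) : ℝ≥0∞) * Dt D q := by
  refine ENNReal.le_of_forall_pos_le_add fun ε hε _ => ?_
  have ex : ∀ p : Measure Y, Dt D p ≠ ⊤ → ∃ Q : ProbabilityMeasure (ProbabilityMeasure Y),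
      (joinP Q : Measure Y) = p ∧
      ∫⁻ q : ProbabilityMeasure Y, D (q : Measure Y) ∂(Q : Measure (ProbabilityMeasure Y)) <
        Dt D p + ε := by
    intro p hp
    have := ENNReal.lt_add_right hp (ENNReal.coe_ne_zero.2 hε.ne')
    conv_lhs at this => rw [Dt]
    rw [iInf_lt_iff] at this
    obtain ⟨Q, h⟩ := this
    rw [iInf_lt_iff] at h
    obtain ⟨h1, h2⟩ := h
    exact ⟨Q, h1, h2⟩
  obtain ⟨Q1, j1, b1⟩ := ex p hp
  obtain ⟨Q2, j2, b2⟩ := ex q hq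
  let Q : ProbabilityMeasure (ProbabilityMeasure Y) :=
    mkPM ((t : ℝ≥0∞) • (Q1 : Measure (ProbabilityMeasure Y)) +
      ((1 - t : ℝ≥0) : ℝ≥0∞) • (Q2 : Measure (ProbabilityMeasure Y))) (mix_prob ht _ _)
  have hQc : (Q : Measure (ProbabilityMeasure Y)) = (t : ℝ≥0∞) • (Q1 : Measure (ProbabilityMeasure Y)) +
      ((1 - t : ℝ≥0) : ℝ≥0∞) • (Q2 : Measure (ProbabilityMeasure Y)) := rfl
  have hj : (joinP Q : Measure Y) = (t : ℝ≥0∞) • p + ((1 - t : ℝ≥0) : ℝ≥0∞) • q := by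
    refine Measure.ext fun A hA => ?_
    have hGe : ∀ Q₁ : ProbabilityMeasure (ProbabilityMeasure Y), (joinP Q₁ : Measure Y) A =
        ∫⁻ q, (q : Measure Y) A ∂(Q₁ : Measure (ProbabilityMeasure Y)) := fun Q₁ => by
      rw [joinP_coe, Measure.join_apply hA,
        lintegral_map (Measure.measurable_coe hA) measurable_PM_coe]
    rw [hGe, hQc, lintegral_add_measure, lintegral_smul_measure, lintegral_smul_measure,
      ← hGe, ← hGe, j1, j2]
    rfl
  have hsum : (t : ℝ≥0∞) + ((1 - t : ℝ≥0) : ℝ≥0∞) = 1 := by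
    rw [← ENNReal.coe_add, add_tsub_cancel_of_le ht, ENNReal.coe_one]
  calc Dt D ((t : ℝ≥0∞) • p + ((1 - t : ℝ≥0) : ℝ≥0∞) • q)
      ≤ ∫⁻ q : ProbabilityMeasure Y, D (q : Measure Y) ∂(Q : Measure (ProbabilityMeasure Y)) :=
        iInf₂_le Q hj
    _ ≤ t * (Dt D p + ε) + ((1 - t : ℝ≥0) : ℝ≥0∞) * (Dt D q + ε) := by
        rw [hQc, lintegral_add_measure, lintegral_smul_measure, lintegral_smul_measure]
        simp only [smul_eq_mul]
        gcongr
    _ = t * Dt D p + ((1 - t : ℝ≥0) : ℝ≥0∞) * Dt D q +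
          ((t : ℝ≥0∞) + ((1 - t : ℝ≥0) : ℝ≥0∞)) * ε := by ring
    _ = _ := by rw [hsum, one_mul]

theorem Dt_le {D : Measure Y → ℝ≥0∞} (hD : Measurable D) (p : Measure Y)
    [hp : IsProbabilityMeasure p] : Dt D p ≤ D p := by
  let p' : ProbabilityMeasure Y := mkPM p hp
  have hp' : (p' : Measure Y) = p := rfl
  let Q : ProbabilityMeasure (ProbabilityMeasure Y) := mkPM (Measure.dirac p') inferInstance
  have hQ : (Q : Measure (ProbabilityMeasure Y)) = Measure.dirac p' := rfl
  refine (iInf₂_le Q ?_).trans ?_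
  · refine Measure.ext fun A hA => ?_
    rw [joinP_coe, Measure.join_apply hA,
      lintegral_map (Measure.measurable_coe hA) measurable_PM_coe, hQ,
      lintegral_dirac' (f := fun q : ProbabilityMeasure Y => (q : Measure Y) A) p' ((Measure.measurable_coe hA).comp measurable_PM_coe)]
    exact congrArg (fun m : Measure Y => m A) hp'
  · rw [hQ, lintegral_dirac' (f := fun q : ProbabilityMeasure Y => D (q : Measure Y)) p' (hD.comp measurable_PM_coe)]
    exact le_of_eq (congrArg D hp')

theorem tilde_convex {r : ℝ} {y₀ : Y} {a k : ℝ} {D : Measure Y → ℝ≥0∞} (hD : Measurable D)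
    {G : Measure Y → EReal}
    (hG : ∀ p ∈ Pr r y₀, G p = (Dt D p : EReal) - (gg r y₀ a k p : EReal)) :
    EConvexOn (Pr r y₀) G := by
  intro p hp q hq t ht
  by_cases h0 : t = 0
  · subst h0; simp
  by_cases h1 : t = 1
  · subst h1; simp
  have hm := mix_Pr ht hp hq
  have ht0 : 0 < (t : ℝ) := by exact_mod_cast pos_iff_ne_zero.2 h0
  have hs0 : 0 < ((1 - t : ℝ≥0) : ℝ) := by
    exact_mod_cast tsub_pos_of_lt (lt_of_le_of_ne ht h1)
  rw [hG _ hm, hG p hp, hG q hq]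
  have nb : ∀ (x : ℝ≥0∞) (g s : ℝ), 0 < s → (s : EReal) * ((x : EReal) - (g : EReal)) ≠ ⊥ := by
    intro x g s hs
    induction x with
    | top => simp [EReal.coe_mul_top_of_pos hs]
    | coe x => 
      have : (((x : ℝ≥0) : ℝ≥0∞) : EReal) = ((x : ℝ) : EReal) := rfl
      rw [this, ← EReal.coe_sub, ← EReal.coe_mul]
      exact EReal.coe_ne_bot _
  by_cases hpt : Dt D p = ⊤
  · rw [hpt, EReal.coe_ennreal_top, EReal.top_sub_coe, EReal.coe_mul_top_of_pos ht0,
      EReal.top_add_of_ne_bot (nb _ _ _ hs0)]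
    exact le_top
  by_cases hqt : Dt D q = ⊤
  · rw [hqt, EReal.coe_ennreal_top, EReal.top_sub_coe, EReal.coe_mul_top_of_pos hs0,
      EReal.add_top_of_ne_bot (nb _ _ _ ht0)]
    exact le_top
  have hmix := Dt_mix hD ht p q hpt hqt
  rw [gg_mix ht hp hq]
  generalize Dt D ((t : ℝ≥0∞) • p + ((1 - t : ℝ≥0) : ℝ≥0∞) • q) = z at *
  generalize Dt D p = x at *
  generalize Dt D q = y at *
  lift x to ℝ≥0 using hpt
  lift y to ℝ≥0 using hqt
  lift z to ℝ≥0 using ne_top_of_le_ne_top (by exact ENNReal.coe_ne_top (r := t * x + (1 - t) * y)) (by exact_mod_cast hmix)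
  have hmix' : z ≤ t * x + (1 - t) * y := by exact_mod_cast hmix
  have hmr : (z : ℝ) ≤ t * x + ((1 - t : ℝ≥0) : ℝ) * y := by exact_mod_cast hmix'
  have cc : ∀ x : ℝ≥0, (((x : ℝ≥0) : ℝ≥0∞) : EReal) = ((x : ℝ) : EReal) := fun _ => rfl
  rw [cc, cc, cc, ← EReal.coe_sub, ← EReal.coe_sub, ← EReal.coe_sub, ← EReal.coe_mul,
    ← EReal.coe_mul, ← EReal.coe_add, EReal.coe_le_coe_iff]
  linarith

theorem tilde_lsc [CompleteSpace Y] {r : ℝ} (hr : 1 ≤ r) {y₀ : Y} {a k : ℝ} {D : Measure Y → ℝ≥0∞}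
    (hDm : Measurable D)
    (hD : ∀ (p : Measure Y) (ps : ℕ → Measure Y), p ∈ Pr r y₀ → (∀ n, ps n ∈ Pr r y₀) →
      WrTendsto r ps p → D p ≤ liminf (fun n => D (ps n)) atTop)
    {G : Measure Y → EReal}
    (hG : ∀ p ∈ Pr r y₀, G p = (Dt D p : EReal) - (gg r y₀ a k p : EReal)) :
    LscWr1 r y₀ G := by
  intro p ps hp hps hw
  have h1 := Dt_lsc hr y₀ hDm hD p ps hp hps hw
  rw [← EReal.coe_ennreal_le_coe_ennreal_iff, coe_liminf] at h1
  have h := ereal_lsc_add h1 (gg_tendsto hr y₀ a k hp hw).neg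
  rw [hG p hp]
  simp_rw [fun n => hG (ps n) (hps n)]
  simpa only [EReal.coe_neg, ← sub_eq_add_neg] using h

end
end WOTaux

open WOT
open WOTaux

/-- comparison of the convex envelope and the convexified cost `C̃`
(Lemma `lem:CastleqtildeC`). -/
theorem statement7 {X Y : Type*}
    [MeasurableSpace X] [MetricSpace X] [CompleteSpace X] [SecondCountableTopology X]
    [BorelSpace X]
    [MeasurableSpace Y] [MetricSpace Y] [CompleteSpace Y] [SecondCountableTopology Y]
    [BorelSpace Y]
    (r : ℝ) (hr : 1 ≤ r) (x₀ : X) (y₀ : Y)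
    (C : X × Measure Y → EReal) (hC : Measurable C) (K : ℝ)
    (hlb : ∀ x, ∀ p ∈ Pr r y₀,
      ((-(K * (1 + dist x x₀ ^ r + (Wr r p (Measure.dirac y₀) ^ r).toReal)) : ℝ) : EReal)
        ≤ C (x, p)) :
    (∀ x, ∀ p ∈ Pr r y₀, ∀ Q ∈ PrP r y₀, intensity Q = p →
      cvxEnvWr r y₀ (fun q => C (x, q)) p ≤ tildeC r y₀ C (x, p) ∧
      tildeC r y₀ C (x, p) ≤ eInt (fun q => tildeC r y₀ C (x, q)) Q) ∧
    (∀ x, LscWr1 r y₀ (fun p => C (x, p)) → ∀ p ∈ Pr r y₀,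
      cvxEnvWr r y₀ (fun q => C (x, q)) p = tildeC r y₀ C (x, p)) := by
  have hk : 0 ≤ |K| := abs_nonneg K
  have ha : ∀ x, 0 ≤ |K| * (1 + dist x x₀ ^ r) := fun x => by positivity
  have hf : ∀ x, Measurable fun q => C (x, q) := fun x => hC.comp measurable_prodMk_left
  have hlb' : ∀ x, ∀ p ∈ Pr r y₀,
      ((-(gg r y₀ (|K| * (1 + dist x x₀ ^ r)) |K| p) : ℝ) : EReal) ≤ C (x, p) := by
    intro x p hp
    refine le_trans ?_ (hlb x p hp)
    haveI := hp.1
    rw [Wr_dirac hr, EReal.coe_le_coe_iff, gg]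
    have h1 : 0 ≤ 1 + dist x x₀ ^ r + (mom r y₀ p).toReal := by positivity
    nlinarith [mul_le_mul_of_nonneg_right (le_abs_self K) h1]
  have hred : ∀ x, ∀ p ∈ Pr r y₀, tildeC r y₀ C (x, p) =
      (Dt (DD r y₀ (|K| * (1 + dist x x₀ ^ r)) |K| fun q => C (x, q)) p : EReal) -
        (gg r y₀ (|K| * (1 + dist x x₀ ^ r)) |K| p : EReal) :=
    fun x p hp => tilde_red hr (ha x) hk (hf x) (hlb' x) hp
  have hle : ∀ x, ∀ p ∈ Pr r y₀,
      cvxEnvWr r y₀ (fun q => C (x, q)) p ≤ tildeC r y₀ C (x, p) := by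
    intro x p hp
    refine iSup₂_le fun G hG => ?_
    refine le_iInf₂ fun Q hQ => ?_
    haveI := hQ.1.1
    have hjQ : Q.join = p := hQ.2
    have hDm := measurable_DD r y₀ (|K| * (1 + dist x x₀ ^ r)) |K| (hf x)
    rw [eInt_red (ha x) hk hQ.1 (hjQ ▸ hp) hDm.aemeasurable (fun q hq => f_eq (hlb' x q hq)), hjQ]
    obtain ⟨Q', hQ'⟩ := exists_lift Q (hQ.1.2.1.mono fun q hq => hq.1)
    have hj' : (joinP Q' : Measure Y) = p := by rw [joinP_coe, hQ', hjQ]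
    have := jensen hr (hf x) (hlb' x) hG.1 hG.2.1 hG.2.2 Q' (hj' ▸ hp)
    rw [hj'] at this
    refine this.trans (le_of_eq ?_)
    rw [← hQ', lintegral_map hDm measurable_PM_coe]
  refine ⟨fun x p hp Q hQ hjQ => ⟨hle x p hp, ?_⟩, fun x hlsc p hp => ?_⟩
  · exact second_ineq (h := fun q => tildeC r y₀ C (x, q)) hr (ha x) hk (hf x) (hred x) hp hQ hjQ
  · refine le_antisymm (hle x p hp) ?_
    have hDm := measurable_DD r y₀ (|K| * (1 + dist x x₀ ^ r)) |K| (hf x)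
    refine le_iSup₂_of_le (fun q => tildeC r y₀ C (x, q)) ⟨?_, ?_, ?_⟩ le_rfl
    · exact tilde_lsc hr hDm (DD_lsc hr y₀ (hlb' x) hlsc) (hred x)
    · exact tilde_convex hDm (hred x)
    · intro q hq
      haveI := hq.1
      show tildeC r y₀ C (x, q) ≤ C (x, q)
      rw [hred x q hq, f_eq (f := fun q => C (x, q)) (hlb' x q hq)]
      exact EReal.sub_le_sub (EReal.coe_ennreal_le_coe_ennreal_iff.2 (Dt_le hDm q)) le_rfl
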